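/- arXiv:math/0701030 — 4 statements merged into one kernel-verified Lean document; each statement's English description precedes it below -/
import Mathlib

section
/- Let κ be a regular infinite cardinal with 2^κ = κ⁺, and let X be a set of cardinality κ. Then the clone lattice Cl(X) is not dually atomic: there exists a clone C ≠ O on X that is not contained in any precomplete clone on X. -/
universe u v

open Cardinal

/-- The set of all finitary operations on `X`: an `n`-th component element is an
operation of arity `n + 1` (so all arities are `≥ 1`). -/
abbrev Ops (X : Type u) : Type u := Σ n : ℕ, ((Fin (n + 1) → X) → X)

/-- A clone: contains all projections and is closed under composition. -/
def IsClone {X : Type u} (C : Set (Ops X)) : Prop :=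
  (∀ (n : ℕ) (k : Fin (n + 1)), (⟨n, fun x => x k⟩ : Ops X) ∈ C) ∧
  ∀ (n m : ℕ) (f : (Fin (n + 1) → X) → X), (⟨n, f⟩ : Ops X) ∈ C →
    ∀ g : Fin (n + 1) → ((Fin (m + 1) → X) → X), (∀ i, (⟨m, g i⟩ : Ops X) ∈ C) →
      (⟨m, fun x => f fun i => g i x⟩ : Ops X) ∈ C

/-- The clone generated by a set of operations. -/
def cloneGen {X : Type u} (F : Set (Ops X)) : Set (Ops X) :=
  ⋂₀ {C : Set (Ops X) | IsClone C ∧ F ⊆ C}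

/-- A precomplete (maximal) clone. -/
def IsPrecompleteClone {X : Type u} (C : Set (Ops X)) : Prop :=
  IsClone C ∧ C ≠ Set.univ ∧ ∀ f : Ops X, f ∉ C → cloneGen (insert f C) = Set.univ

/-- A unary function, viewed as a unary operation in `Ops X`. -/
def unaryOp {X : Type u} (F : X → X) : Ops X := ⟨0, fun x => F (x 0)⟩

/-- The polymorphism clone of a set of binary operations. -/
def Pol2 {X : Type u} (H : Set (X → X → X)) : Set (Ops X) :=
  {f : Ops X | ∀ g : Fin (f.1 + 1) → (X → X → X), (∀ i, g i ∈ H) →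
    (fun x y => f.2 fun i => g i x y) ∈ H}

/-!
Well-order `X` in type `κ`, and write `f ≤* g` when `f x ≤ g x` for all large `x`. Regularity of
`κ` and `2 ^ κ = κ⁺` give a family `F i` of increasing functions that dominates every operation and
in which `i < j` implies `(F i)^[n] ≤* F j` for all `n`. For an ultrafilter `U`, let `C` be the
clone of the operations that preserve `Iic x` for `U`-almost all `x`.

Call `F`-superorbit a sequence with `F (x i) ≤ x (i + 1)`, and let `E i` be the clone of the
operations `f` such that, for some `n` and some `A ∈ U`, the `n`-th term of any `F i`-superorbit
in `A` bounds `f` below the initial term. If `A` witnesses that the unary operation `F j`, `j > i`,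
belongs to `E i`, then any set with gaps shorter than some iterate of `F i` still has such gaps
after removing `A`. Finitely many of these sets therefore never cover `X`, and `U` can be chosen so
that `F j ∉ E i` whenever `i < j`.

Now let `D ⊇ C` be a clone missing an operation `p`, and let `F i` dominate `p`. If some `g ∈ D`
were outside `E i`, then for `U`-almost all `x` it would take a value above `F i x`, hence above all
values of `p`, on arguments below `x`; an operation of `C` picks such arguments of `g`, and the
minimum with `p`, which is also obtained from `C`, turns the result into `p`. So `D ⊆ E i`, and
likewise `D ⊆ E j` for all `j ≥ i`. Adding `F j`, where `j > i`, to `D` gives a strictly larger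
clone that is still inside `E j ≠ O`, so `D` is not precomplete.
-/

open Filter Set

/-- The operation `f` is dominated by `h` along the filter `l`: for `l`-almost all `x`, the values
of `f` on arguments from `Iic x` are at most `h x`. -/
def MajorizedBy {X : Type u} [Preorder X] (l : Filter X) (h : X → X) (f : Ops X) : Prop :=
  ∀ᶠ x in l, ∀ y, (∀ k, y k ≤ x) → f.2 y ≤ h x

/-- The clone of the operations that preserve the initial segment `Iic x` for `l`-almost all `x`.
For a suitable ultrafilter `l` it is the clone that lies below no precomplete clone. -/
def segmentClone {X : Type u} [Preorder X] (l : Filter X) : Set (Ops X) :=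
  {f | MajorizedBy l id f}

/-- An `F`-superorbit: a sequence that grows at least as fast as the orbits of `F`. -/
def IsSuperorbit {X : Type u} [LE X] (F : X → X) (x : ℕ → X) : Prop :=
  ∀ i, F (x i) ≤ x (i + 1)

/-- For some `n`, the `n`-th term of any `F`-superorbit whose terms up to index `n` lie in `A`
bounds the values of `f` on arguments below the initial term. -/
def BoundedOnSuperorbits {X : Type u} [LE X] (F : X → X) (A : Set X) (f : Ops X) : Prop :=
  ∃ n, ∀ x : ℕ → X, IsSuperorbit F x → (∀ i ≤ n, x i ∈ A) →
    ∀ y, (∀ k, y k ≤ x 0) → f.2 y ≤ x n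

/-- The clone of the operations that are bounded on the `F`-superorbits within some set of `l`.
These clones are the upper bounds used to see that a clone is proper. -/
def growthClone {X : Type u} [Preorder X] (l : Filter X) (F : X → X) : Set (Ops X) :=
  {f | ∃ A ∈ l, BoundedOnSuperorbits F A f}

/-- Syndeticity relative to `F`: all gaps of `B` beyond some point are bounded by a fixed iterate
of `F`. For `F x = x + 1` on `ℕ` this is the usual notion. -/
def IsSyndetic {X : Type u} [Preorder X] (F : X → X) (B : Set X) : Prop :=
  ∃ k, ∀ᶠ x in atTop, (B ∩ Icc x (F^[k] x)).Nonempty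

/-- A scale: a linearly ordered family of increasing functions that dominates all operations, in
which every function eventually exceeds each fixed iterate of the earlier ones. -/
structure IsScale {X : Type u} [Preorder X] {I : Type v} [LT I] (F : I → X → X) : Prop where
  monotone (i : I) : Monotone (F i)
  lt_apply (i : I) (x : X) : x < F i x
  iterate_le {i j : I} (hij : i < j) (n : ℕ) : ∀ᶠ x in atTop, (F i)^[n] x ≤ F j x
  exists_majorizedBy (f : Ops X) : ∃ i, MajorizedBy atTop (F i) f

section Clones

variable {X : Type u}

theorem cloneGen_subset {C F : Set (Ops X)} (hC : IsClone C) (hF : F ⊆ C) : cloneGen F ⊆ C :=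
  sInter_subset_of_mem ⟨hC, hF⟩

section Preorder

variable [Preorder X] {l : Filter X} {F G : X → X} {f : Ops X}

theorem MajorizedBy.mono (hf : MajorizedBy l F f) (hFG : ∀ᶠ x in l, F x ≤ G x) :
    MajorizedBy l G f := by
  filter_upwards [hf, hFG] with x hx hle y hy
  exact (hx y hy).trans hle

theorem majorizedBy_unaryOp (hF : Monotone F) : MajorizedBy l F (unaryOp F) :=
  Eventually.of_forall fun _ _ hy => hF (hy 0)

theorem isClone_segmentClone (l : Filter X) : IsClone (segmentClone l) := by
  refine ⟨fun n k => Eventually.of_forall fun _ _ hy => hy k, fun n m f hf g hg => ?_⟩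
  filter_upwards [hf, eventually_all.2 hg] with x hfx hgx y hy
  exact hfx _ fun i => hgx i y hy

theorem IsSuperorbit.monotone (hF : id ≤ F) {x : ℕ → X} (hx : IsSuperorbit F x) : Monotone x :=
  monotone_nat_of_le_succ fun i => (hF (x i)).trans (hx i)

theorem IsSuperorbit.shift {x : ℕ → X} (hx : IsSuperorbit F x) (n : ℕ) :
    IsSuperorbit F fun i => x (n + i) :=
  fun i => hx (n + i)

theorem isClone_growthClone (l : Filter X) (hF : id ≤ F) : IsClone (growthClone l F) := by
  refine ⟨fun n k => ⟨univ, univ_mem, 0, fun x _ _ y hy => hy k⟩, ?_⟩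
  rintro n m f ⟨A, hA, k, hf⟩ g hg
  choose B hB r hg using hg
  let s := Finset.univ.sup r
  have hrs (i) : r i ≤ s := Finset.le_sup (Finset.mem_univ i)
  refine ⟨A ∩ ⋂ i, B i, inter_mem hA (iInter_mem.2 hB), s + k, fun x hx hmem y hy => ?_⟩
  have hgs (i) : g i y ≤ x s :=
    (hg i x hx (fun j hj => mem_iInter.1 (hmem j (by grind)).2 i) y hy).trans
      (hx.monotone hF (hrs i))
  exact hf _ (hx.shift s) (fun i hi => (hmem _ (by omega)).1) _ hgs

theorem MajorizedBy.mem_growthClone (hf : MajorizedBy l F f) : f ∈ growthClone l F :=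
  ⟨_, hf, 1, fun _ hx hmem y hy => (hmem 0 zero_le_one y hy).trans (hx 0)⟩

end Preorder

section LinearOrder

variable [LinearOrder X]

theorem inf_mem_segmentClone (l : Filter X) {n : ℕ} (p : (Fin (n + 1) → X) → X) :
    (⟨n + 1, fun z => min (p (Fin.tail z)) (z 0)⟩ : Ops X) ∈ segmentClone l :=
  Eventually.of_forall fun _ _ hz => (min_le_right _ _).trans (hz 0)

theorem exists_isLeast_of_wellFoundedLT [WellFoundedLT X] {s : Set X} (hs : s.Nonempty) :
    ∃ a, IsLeast s a :=
  (exists_minimal_of_wellFoundedLT (· ∈ s) hs).imp fun _ => minimal_iff_isLeast.1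

-- `p z = min (p z) (g (c z))`, where `c z` realizes the hypothesis at the least admissible bound
-- `x` of `z`; minimality makes the components of `c` members of `segmentClone l`.
theorem IsClone.mem_of_eventually_exists_le [WellFoundedLT X] {l : Filter X} [l.NeBot]
    (hl : l ≤ atTop) {D : Set (Ops X)} (hD : IsClone D) (hlD : segmentClone l ⊆ D) {p g : Ops X}
    (hg : g ∈ D)
    (hpg : ∀ᶠ x in l, ∃ y, (∀ i, y i ≤ x) ∧ ∀ z, (∀ k, z k ≤ x) → p.2 z ≤ g.2 y) : p ∈ D := by
  obtain ⟨n, p⟩ := p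
  obtain ⟨m, g⟩ := g
  obtain ⟨A, hA, hpg⟩ := eventually_iff_exists_mem.1 hpg
  have hex (z : Fin (n + 1) → X) :
      ∃ y, (∀ x ∈ A, (∀ k, z k ≤ x) → ∀ i, y i ≤ x) ∧ p z ≤ g y := by
    have hz : ∀ᶠ x in l, x ∈ A ∧ ∀ k, z k ≤ x :=
      Eventually.and hA (eventually_all.2 fun k => hl (eventually_ge_atTop (z k)))
    obtain ⟨a, ⟨haA, hza⟩, ha⟩ := exists_isLeast_of_wellFoundedLT hz.exists
    obtain ⟨y, hya, hpy⟩ := hpg a haA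
    exact ⟨y, fun x hx hzx i => (hya i).trans (ha ⟨hx, hzx⟩), hpy z hza⟩
  choose c hc hpc using hex
  have hcD (i) : (⟨n, fun z => c z i⟩ : Ops X) ∈ D :=
    hlD (mem_of_superset hA fun x hx z hz => hc z x hx hz i)
  have hgc : (⟨n, fun z => g (c z)⟩ : Ops X) ∈ D := hD.2 m n g hg (fun i z => c z i) hcD
  have hmin := hD.2 (n + 1) n _ (hlD (inf_mem_segmentClone l p))
    (Fin.cons (fun z => g (c z)) fun k z => z k) (Fin.cases hgc (hD.1 n))
  convert hmin using 3 with z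
  exact (min_eq_left (hpc z)).symm

theorem IsClone.subset_growthClone [WellFoundedLT X] {U : Ultrafilter X}
    (hU : (U : Filter X) ≤ atTop) {D : Set (Ops X)} (hD : IsClone D) (hUD : segmentClone U ⊆ D)
    {p : Ops X} (hp : p ∉ D) {F : X → X} (hpF : MajorizedBy U F p) : D ⊆ growthClone U F := by
  intro g hg
  contrapose! hp
  have hgF : ∀ᶠ x in U, ¬ ∀ y, (∀ i, y i ≤ x) → g.2 y ≤ F x :=
    Ultrafilter.eventually_not.2 fun h => hp (MajorizedBy.mem_growthClone h)
  refine hD.mem_of_eventually_exists_le hU hUD hg ?_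
  filter_upwards [hgF, hpF] with x hgx hpx
  push Not at hgx
  obtain ⟨y, hyx, hy⟩ := hgx
  exact ⟨y, hyx, fun z hz => (hpx z hz).trans hy.le⟩

end LinearOrder

end Clones

section Syndetic

variable {X : Type u} [LinearOrder X] {F G : X → X} {A B : Set X}

theorem IsSyndetic.frequently_mem [Nonempty X] (hB : IsSyndetic F B) : ∃ᶠ x in atTop, x ∈ B := by
  obtain ⟨k, hk⟩ := hB
  refine frequently_atTop.2 fun a => ?_
  obtain ⟨x, ⟨y, hyB, hxy, -⟩, hax⟩ := (hk.and (eventually_ge_atTop a)).exists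
  exact ⟨y, hax.trans hxy, hyB⟩

theorem IsSyndetic.exists_superorbit [Nonempty X] (hF : Monotone F) (hid : id ≤ F)
    (hB : IsSyndetic F B) (n : ℕ) :
    ∃ N, ∀ᶠ x in atTop, ∃ y, IsSuperorbit F y ∧ (∀ i, y i ∈ B) ∧ x ≤ y 0 ∧ y n ≤ F^[N] x := by
  obtain ⟨k, hk⟩ := hB
  obtain ⟨a, ha⟩ := eventually_atTop.1 hk
  have hex (x : X) : ∃ y, x ≤ y ∧ y ≤ F^[k] x ∧ (a ≤ x → y ∈ B) := by
    by_cases hx : a ≤ x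
    · obtain ⟨y, hyB, hxy, hyx⟩ := ha x hx
      exact ⟨y, hxy, hyx, fun _ => hyB⟩
    · exact ⟨x, le_rfl, Function.id_le_iterate_of_id_le hid k x, fun h => absurd h hx⟩
  choose next hle hnext hmem using hex
  have hstep : next ∘ F ≤ F^[k + 1] := fun x => hnext (F x)
  refine ⟨(k + 1) * n + k, ?_⟩
  filter_upwards [eventually_ge_atTop a] with x hx
  let y (i : ℕ) : X := (next ∘ F)^[i] (next x)
  have hsucc (i) : y (i + 1) = next (F (y i)) := Function.iterate_succ_apply' _ _ _
  have hy : IsSuperorbit F y := fun i => (hle _).trans_eq (hsucc i).symm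
  have hay (i) : a ≤ y i := (hx.trans (hle x)).trans (hy.monotone hid (Nat.zero_le i))
  refine ⟨y, hy, ?_, hle x, ?_⟩
  · rintro (_ | i)
    · exact hmem x hx
    · exact hsucc i ▸ hmem _ ((hay i).trans (hid _))
  · calc y n ≤ (F^[k + 1])^[n] (next x) := (hF.iterate _).le_iterate_of_le hstep n _
      _ ≤ (F^[k + 1])^[n] (F^[k] x) := (hF.iterate _).iterate n (hnext x)
      _ = F^[(k + 1) * n + k] x := by rw [← Function.iterate_mul, ← Function.iterate_add_apply]

theorem IsSyndetic.diff_of_boundedOnSuperorbits [Nonempty X] (hF : Monotone F) (hlt : ∀ x, x < F x)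
    (hG : Monotone G) (hFG : ∀ n, ∀ᶠ x in atTop, F^[n] x ≤ G x) (hB : IsSyndetic F B)
    (hA : BoundedOnSuperorbits F A (unaryOp G)) : IsSyndetic F (B \ A) := by
  obtain ⟨n, hn⟩ := hA
  have hid : id ≤ F := fun x => (hlt x).le
  obtain ⟨N, hN⟩ := hB.exists_superorbit hF hid n
  refine ⟨N, ?_⟩
  filter_upwards [hN, hFG (N + 1)] with x ⟨y, hy, hyB, hxy, hyN⟩ hxG
  have hyG : y n < G (y 0) :=
    calc y n ≤ F^[N] x := hyN
      _ < F^[N + 1] x := by rw [Function.iterate_succ_apply']; exact hlt _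
      _ ≤ G x := hxG
      _ ≤ G (y 0) := hG hxy
  obtain ⟨i, hin, hiA⟩ : ∃ i ≤ n, y i ∉ A := by
    by_contra! hyA
    exact hyG.not_ge (hn y hy hyA (fun _ => y 0) fun _ => le_rfl)
  have hmono := hy.monotone hid
  exact ⟨y i, ⟨hyB i, hiA⟩, hxy.trans (hmono (Nat.zero_le i)), (hmono hin).trans hyN⟩

end Syndetic

namespace IsScale

variable {X : Type u} [LinearOrder X] {I : Type v} [LinearOrder I] {F : I → X → X}

theorem id_le (hF : IsScale F) (i : I) : id ≤ F i :=
  fun x => (hF.lt_apply i x).le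

theorem eventually_le (hF : IsScale F) {i j : I} (hij : i ≤ j) : ∀ᶠ x in atTop, F i x ≤ F j x := by
  rcases hij.eq_or_lt with rfl | hij
  · exact Eventually.of_forall fun _ => le_rfl
  · exact hF.iterate_le hij 1

theorem exists_gt [Nonempty X] (hF : IsScale F) (i : I) : ∃ j, i < j := by
  obtain ⟨j, hj⟩ := hF.exists_majorizedBy (unaryOp (F i ∘ F i))
  refine ⟨j, lt_of_not_ge fun hji => ?_⟩
  obtain ⟨x, hx, hjx⟩ := (hj.and (hF.eventually_le hji)).exists
  exact (hF.lt_apply i (F i x)).not_ge ((hx (fun _ => x) fun _ => le_rfl).trans hjx)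

theorem isSyndetic_of_lt (hF : IsScale F) {i j : I} (hij : i < j) {B : Set X}
    (hB : IsSyndetic (F i) B) : IsSyndetic (F j) B := by
  obtain ⟨k, hk⟩ := hB
  refine ⟨1, ?_⟩
  filter_upwards [hk, hF.iterate_le hij k] with x ⟨y, hyB, hxy, hyx⟩ hle
  exact ⟨y, hyB, hxy, hyx.trans hle⟩

theorem isSyndetic_compl_biUnion [Nonempty X] (hF : IsScale F) {ι : Type*} {a b : ι → I}
    {A : ι → Set X} (hab : ∀ q, a q < b q)
    (hA : ∀ q, BoundedOnSuperorbits (F (a q)) (A q) (unaryOp (F (b q))))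
    (s : Finset ι) {m : I} (hm : ∀ q ∈ s, a q ≤ m) : IsSyndetic (F m) (⋃ q ∈ s, A q)ᶜ := by
  classical
  induction s using Finset.induction_on_max_value a generalizing m with
  | empty => exact ⟨0, Eventually.of_forall fun x => ⟨x, by simp⟩⟩
  | insert q s _ hmax ih =>
    have hdiff : IsSyndetic (F (a q)) (⋃ r ∈ insert q s, A r)ᶜ := by
      rw [Finset.set_biUnion_insert, compl_union, inter_comm, ← sdiff_eq]
      exact (ih hmax).diff_of_boundedOnSuperorbits (hF.monotone _) (hF.lt_apply _) (hF.monotone _)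
        (hF.iterate_le (hab q)) (hA q)
    rcases (hm q (Finset.mem_insert_self q s)).eq_or_lt with rfl | hqm
    · exact hdiff
    · exact hF.isSyndetic_of_lt hqm hdiff

theorem exists_ultrafilter_notMem_growthClone [Nonempty X] (hF : IsScale F) :
    ∃ U : Ultrafilter X, (U : Filter X) ≤ atTop ∧
      ∀ i j, i < j → unaryOp (F j) ∉ growthClone U (F i) := by
  let S : Set (Set X) := {B | ∃ i j, i < j ∧ BoundedOnSuperorbits (F i) Bᶜ (unaryOp (F j))}
  have hS : (atTop ⊓ generate S).NeBot := by
    refine inf_neBot_iff.2 fun {s} hs {t} ht => ?_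
    obtain ⟨T, hTS, hT, hTt⟩ := mem_generate_iff.1 ht
    choose a b hab hbdd using fun B : T => hTS B.2
    have := hT.fintype
    obtain ⟨i₀, -⟩ := hF.exists_majorizedBy (unaryOp id)
    have : Nonempty I := ⟨i₀⟩
    obtain ⟨m, hm⟩ := Finite.exists_le a
    have hsynd := hF.isSyndetic_compl_biUnion hab hbdd Finset.univ fun B _ => hm B
    obtain ⟨x, hxT, hxs⟩ := (hsynd.frequently_mem.and_eventually hs).exists
    simp only [compl_iUnion, compl_compl, mem_iInter] at hxT
    exact ⟨x, hxs, hTt fun B hB => hxT ⟨B, hB⟩ (Finset.mem_univ _)⟩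
  let U := Ultrafilter.of (atTop ⊓ generate S)
  have hU : (U : Filter X) ≤ atTop ⊓ generate S := Ultrafilter.of_le _
  refine ⟨U, hU.trans inf_le_left, fun i j hij ⟨A, hA, hbdd⟩ => ?_⟩
  have hAS : Aᶜ ∈ S := ⟨i, j, hij, by rwa [compl_compl]⟩
  exact Ultrafilter.compl_notMem_iff.2 hA (hU.trans inf_le_right (mem_generate_of_mem hAS))

end IsScale

theorem stmt1_general {X : Type u} [LinearOrder X] [WellFoundedLT X] [Nonempty X] {I : Type v}
    [LinearOrder I] {F : I → X → X} (hF : IsScale F) :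
    ∃ C : Set (Ops X), IsClone C ∧ C ≠ Set.univ ∧
      ∀ D : Set (Ops X), IsPrecompleteClone D → ¬ C ⊆ D := by
  obtain ⟨U, hU, hnot⟩ := hF.exists_ultrafilter_notMem_growthClone
  refine ⟨segmentClone (U : Filter X), isClone_segmentClone _, fun huniv => ?_, ?_⟩
  · obtain ⟨i, -⟩ := hF.exists_majorizedBy (unaryOp id)
    obtain ⟨j, hij⟩ := hF.exists_gt i
    have hj : unaryOp (F j) ∈ segmentClone U := huniv ▸ mem_univ _
    exact hnot i j hij (hj.mono (Eventually.of_forall (hF.id_le i))).mem_growthClone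
  · rintro D ⟨hD, hDne, hDmax⟩ hUD
    obtain ⟨p, hp⟩ := (ne_univ_iff_exists_notMem D).1 hDne
    obtain ⟨i, hpi⟩ := hF.exists_majorizedBy p
    obtain ⟨j, hij⟩ := hF.exists_gt i
    obtain ⟨k, hjk⟩ := hF.exists_gt j
    have hDi : D ⊆ growthClone U (F i) := hD.subset_growthClone hU hUD hp (hU hpi)
    have hDj : D ⊆ growthClone U (F j) :=
      hD.subset_growthClone hU hUD hp (hU (hpi.mono (hF.eventually_le hij.le)))
    have hgen : cloneGen (insert (unaryOp (F j)) D) ⊆ growthClone U (F j) :=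
      cloneGen_subset (isClone_growthClone _ (hF.id_le j))
        (insert_subset (majorizedBy_unaryOp (hF.monotone j)).mem_growthClone hDj)
    rw [hDmax _ fun hj => hnot i j hij (hDi hj)] at hgen
    exact hnot j k hjk (hgen (mem_univ _))

section Existence

theorem exists_forall_of_forall_Iio {I : Type*} [LinearOrder I] [WellFoundedLT I] {α : Type*}
    {P : ∀ i : I, (Iio i → α) → α → Prop} (hP : ∀ i prev, ∃ a, P i prev a) :
    ∃ F : I → α, ∀ i, P i (fun j => F j) (F i) := by
  choose next hnext using hP
  let F : I → α := wellFounded_lt.fix fun i prev => next i fun j => prev j j.2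
  refine ⟨F, fun i => ?_⟩
  rw [show F i = next i fun j => F j from wellFounded_lt.fix_eq _ i]
  exact hnext i _

variable {X : Type u} [LinearOrder X] [WellFoundedLT X] [IsRegularCardinalOrder X]

theorem exists_forall_lt_of_mk_lt {s : Set X} (hs : #s < #X) : ∃ b, ∀ x ∈ s, x < b :=
  not_isCofinal_iff.1 fun h => (Order.cof_le h).not_gt (by rwa [Order.cof_eq_cardinalMk])

variable [Infinite X]

theorem mk_Iic_lt_of_isRegularCardinalOrder (x : X) : #(Iic x) < #X :=
  mk_Iic_lt x ord_cardinalMk (aleph0_le_mk X)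

theorem mk_pi_Iic_lt (n : ℕ) (x : X) : #(Fin n → Iic x) < #X := by
  have hx := mk_Iic_lt_of_isRegularCardinalOrder x
  rcases finite_or_infinite (Iic x) with _ | _
  · exact (lt_aleph0_of_finite _).trans_le (aleph0_le_mk X)
  · calc #(Fin n → Iic x) = #(Iic x) ^ n := by simp
      _ ≤ #(Iic x) := power_nat_le (aleph0_le_mk _)
      _ < #X := hx

theorem exists_majorizedBy_atTop (f : Ops X) : ∃ h, MajorizedBy atTop h f := by
  have hex (x : X) : ∃ b, ∀ v ∈ range fun y : Fin (f.1 + 1) → Iic x => f.2 fun k => y k, v < b :=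
    exists_forall_lt_of_mk_lt (mk_range_le.trans_lt (mk_pi_Iic_lt _ x))
  choose h hh using hex
  exact ⟨h, Eventually.of_forall fun x y hy => (hh x _ ⟨fun k => ⟨y k, hy k⟩, rfl⟩).le⟩

theorem exists_monotone_lt_and_le (g : X → X) :
    ∃ F, Monotone F ∧ (∀ x, x < F x) ∧ g ≤ F := by
  have hex (x : X) : ∃ b, IsLeast {b | ∀ y ≤ x, max y (g y) < b} b := by
    obtain ⟨b, hb⟩ := exists_forall_lt_of_mk_lt
      (mk_image_le.trans_lt (mk_Iic_lt_of_isRegularCardinalOrder x) :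
        #((fun y => max y (g y)) '' Iic x) < #X)
    exact exists_isLeast_of_wellFoundedLT ⟨b, fun y hy => hb _ (mem_image_of_mem _ hy)⟩
  choose F hF using hex
  have hlt (x) : max x (g x) < F x := (hF x).1 x le_rfl
  exact ⟨F, fun x x' hxx' => (hF x).2 fun y hy => (hF x').1 y (hy.trans hxx'),
    fun x => (le_max_left _ _).trans_lt (hlt x), fun x => (le_max_right _ _).trans (hlt x).le⟩

-- Diagonalization: `G x` only has to bound the functions whose index is sent below `x`.
theorem exists_forall_eventually_le {ι : Type*} (e : ι ↪ X) (f : ι → X → X) :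
    ∃ G : X → X, ∀ i, ∀ᶠ x in atTop, f i x ≤ G x := by
  have hex (x : X) : ∃ b, ∀ v ∈ Function.extend e (fun i => f i x) id '' Iic x, v < b :=
    exists_forall_lt_of_mk_lt (mk_image_le.trans_lt (mk_Iic_lt_of_isRegularCardinalOrder x))
  choose G hG using hex
  exact ⟨G, fun i => (eventually_ge_atTop (e i)).mono fun x hx =>
    (hG x _ ⟨e i, hx, e.injective.extend_apply _ _ _⟩).le⟩

theorem exists_monotone_eventually_iterate_le {ι : Type*} (e : ι ↪ X) (f : ι → X → X) (g : X → X) :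
    ∃ F, Monotone F ∧ (∀ x, x < F x) ∧ g ≤ F ∧ ∀ i n, ∀ᶠ x in atTop, (f i)^[n] x ≤ F x := by
  choose G hG using fun i =>
    exists_forall_eventually_le (Infinite.natEmbedding X) fun n => (f i)^[n]
  obtain ⟨H, hH⟩ := exists_forall_eventually_le e G
  obtain ⟨F, hF, hlt, hle⟩ := exists_monotone_lt_and_le (g ⊔ H)
  refine ⟨F, hF, hlt, le_sup_left.trans hle, fun i n => ?_⟩
  filter_upwards [hG i n, hH i] with x hx hx'
  exact (hx.trans hx').trans (le_sup_right.trans hle x)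

theorem exists_isScale_of_dominating {I : Type v} [LinearOrder I] [WellFoundedLT I]
    (hI : ∀ i : I, Nonempty (Iio i ↪ X)) {g : I → X → X}
    (hg : ∀ h : X → X, ∃ i, ∀ᶠ x in atTop, h x ≤ g i x) : ∃ F : I → X → X, IsScale F := by
  obtain ⟨F, hF⟩ := exists_forall_of_forall_Iio fun i prev =>
    exists_monotone_eventually_iterate_le (hI i).some prev (g i)
  refine ⟨F, fun i => (hF i).1, fun i => (hF i).2.1, fun hij => (hF _).2.2.2 ⟨_, hij⟩, fun f => ?_⟩
  obtain ⟨h, hfh⟩ := exists_majorizedBy_atTop f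
  obtain ⟨i, hi⟩ := hg h
  exact ⟨i, hfh.mono (hi.mono fun x hx => hx.trans ((hF i).2.2.1 x))⟩

end Existence

theorem exists_isRegularCardinalOrder {X : Type u} (hX : (#X).IsRegular) :
    ∃ (_ : LinearOrder X) (_ : WellFoundedLT X), IsRegularCardinalOrder X := by
  obtain ⟨_, _, h⟩ := exists_ord_eq_type_lt X
  refine ⟨_, ‹_›, ⟨?_⟩⟩
  rw [← Ordinal.cof_type, ← h, hX.cof_ord]

theorem exists_isScale {X : Type u} (hX : (#X).IsRegular) (hgch : 2 ^ #X = Order.succ #X) :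
    ∃ (_ : LinearOrder X) (_ : WellFoundedLT X) (I : Type u) (_ : LinearOrder I) (F : I → X → X),
      IsScale F := by
  obtain ⟨_, _, _⟩ := exists_isRegularCardinalOrder hX
  have : Infinite X := infinite_iff.2 hX.aleph0_le
  have hcard : #(X → X) = Order.succ #X := by
    rw [← power_def, power_self_eq hX.aleph0_le, hgch]
  let I := (#(X → X)).ord.ToType
  obtain ⟨e⟩ : Nonempty (I ≃ (X → X)) := Cardinal.eq.1 (mk_ord_toType _)
  have hI (i : I) : Nonempty (Iio i ↪ X) := by
    have hi : #(Iio i) < Order.succ #X := by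
      simpa [I, hcard] using mk_Iio_lt i (by simp [I])
    exact Order.lt_succ_iff.1 hi
  obtain ⟨F, hF⟩ := exists_isScale_of_dominating hI (g := e)
    fun h => ⟨e.symm h, Eventually.of_forall fun x => by rw [e.apply_symm_apply]⟩
  exact ⟨_, ‹_›, I, _, F, hF⟩

/-- **Goldstern–Shelah**: if `κ` is regular and `2 ^ κ = κ⁺`, then the clone lattice on a
set of cardinality `κ` is not dually atomic: some proper clone is contained in no
precomplete clone. -/
theorem stmt1 {X : Type u} (κ : Cardinal.{u}) (hreg : κ.IsRegular)
    (hgch : 2 ^ κ = Order.succ κ) (hX : #X = κ) :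
    ∃ C : Set (Ops X), IsClone C ∧ C ≠ Set.univ ∧
      ∀ D : Set (Ops X), IsPrecompleteClone D → ¬ C ⊆ D := by
  subst hX
  obtain ⟨_, _, I, _, F, hF⟩ := exists_isScale hreg hgch
  have : Nonempty X := mk_ne_zero_iff.1 hreg.ne_zero
  exact stmt1_general hF
end

section
/- Let X be a countably infinite set and let I be an ideal of subsets of X, with support supp(I) = ⋃_{A ∈ I} A. Let C_I = {f ∈ O : f[A^{n_f}] ∈ I for all A ∈ I}, where n_f is the arity of f. Then: (1) if ∅ ≠ supp(I) ≠ X, then C_I is a precomplete clone if and only if I contains only finite sets or I contains all subsets of supp(I); (2) if supp(I) = X, then C_I is a precomplete clone if and only if I contains some but not all infinite subsets of X and for every B ⊆ X with B ∉ I there exists f ∈ C_I such that f[B^{n_f}] = X. -/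
universe u v

open Cardinal

/-- The clone `C_I` induced by an ideal `I` of subsets of `X`. -/
def idealClone {X : Type u} (I : Set (Set X)) : Set (Ops X) :=
  {f : Ops X | ∀ A ∈ I, (f.2 '' {x : Fin (f.1 + 1) → X | ∀ i, x i ∈ A}) ∈ I}

/-!
If `I` contains an infinite set `A`, then every countable nonempty set `B` is the image of `A` under
a unary map into `B`; so if all such maps belong to `C_I`, then `B ∈ I`.

If `∅ ≠ supp I ≠ X`, then `C_I` is contained in the clone of all operations preserving `supp I`,
which is precomplete; so `C_I` is precomplete iff the two clones agree, and for an `I` with an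
infinite member this forces every `B ⊆ supp I` into `I`. If `supp I = X` and `B ∉ I`, the sets
covered by some `f[Bⁿ]` with `f ∈ C_I` form an ideal `J ∋ B` with `C_I ⊆ C_J`. Were `X ∉ J`,
precompleteness would give `C_I = C_J` and hence `B ∈ I`. Conversely, adjoining some `f ∉ C_I` to
`C_I` yields all operations with values in some `B = f[Aⁿ] ∉ I`, and composing these with an
operation of `C_I` that maps a power of `B` onto `X` yields everything.
-/

/-- The image `f[Aⁿ]` of a power of the set `A` under an operation `f`, by which membership in
`idealClone` is expressed. The index type of the arguments is arbitrary. -/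
def powImage {X ι : Type*} (f : (ι → X) → X) (A : Set X) : Set X :=
  f '' {x | ∀ i, x i ∈ A}

section Images

variable {X : Type*}

theorem finite_powImage {ι : Type*} [Finite ι] {A : Set X} (hA : A.Finite) (f : (ι → X) → X) :
    (powImage f A).Finite :=
  (Set.Finite.pi' fun _ => hA).image f

theorem powImage_unaryOp (g : X → X) (A : Set X) : powImage (unaryOp g).2 A = g '' A := by
  ext y
  constructor
  · rintro ⟨x, hx, rfl⟩
    exact ⟨x 0, hx 0, rfl⟩
  · rintro ⟨a, ha, rfl⟩
    exact ⟨fun _ => a, fun _ => ha, rfl⟩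

theorem exists_range_subset_image_eq {Y : Type*} {A : Set X} {B : Set Y} (hA : A.Infinite)
    (hB : B.Countable) (hne : B.Nonempty) :
    ∃ g : X → Y, Set.range g ⊆ B ∧ g '' A = B := by
  obtain ⟨s, rfl⟩ := hB.exists_eq_range hne
  let e : ℕ → X := fun k => hA.natEmbedding A k
  have he : Function.Injective e := Subtype.val_injective.comp (hA.natEmbedding A).injective
  have hrange : Set.range (s ∘ Function.invFun e) ⊆ Set.range s := Set.range_comp_subset_range _ _
  refine ⟨s ∘ Function.invFun e, hrange, ((Set.image_subset_range _ _).trans hrange).antisymm ?_⟩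
  rintro _ ⟨k, rfl⟩
  exact ⟨e k, (hA.natEmbedding A k).2, congrArg s (Function.leftInverse_invFun he k)⟩

end Images

section Clones

variable {X : Type u} {C D : Set (Ops X)}

theorem isClone_cloneGen (F : Set (Ops X)) : IsClone (cloneGen F) :=
  ⟨fun n k _ hD => hD.1.1 n k, fun n m f hf g hg _ hD =>
    hD.1.2 n m f (hf _ hD) g fun i => hg i _ hD⟩

theorem subset_cloneGen (F : Set (Ops X)) : F ⊆ cloneGen F :=
  Set.subset_sInter fun _ hD => hD.2

theorem IsPrecompleteClone.eq_of_subset (hC : IsPrecompleteClone C) (hD : IsClone D)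
    (hCD : C ⊆ D) (hne : D ≠ Set.univ) : C = D := by
  refine hCD.antisymm fun f hfD => ?_
  by_contra hfC
  have hgen : cloneGen (insert f C) ⊆ D :=
    Set.sInter_subset_of_mem ⟨hD, Set.insert_subset hfD hCD⟩
  exact hne (Set.univ_subset_iff.mp (hC.2.2 f hfC ▸ hgen))

theorem IsClone.mem_of_forall_mem_powImage (hD : IsClone D) {f : Ops X} (hf : f ∈ D) {A : Set X}
    (hA : ∀ g : Ops X, (∀ x, g.2 x ∈ A) → g ∈ D) {h : Ops X}
    (hh : ∀ x, h.2 x ∈ powImage f.2 A) : h ∈ D := by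
  choose a haA hfa using hh
  have hcomp : (⟨h.1, fun x => f.2 fun i => a x i⟩ : Ops X) ∈ D :=
    hD.2 _ _ f.2 hf (fun i x => a x i) fun i => hA _ fun x => haA x i
  simpa only [hfa] using hcomp

theorem IsClone.exists_powImage_eq_image (hC : IsClone C) {f : Ops X} (hf : f ∈ C)
    {g : Fin (f.1 + 1) → Ops X} (hg : ∀ i, g i ∈ C) (B : Set X) :
    ∃ h ∈ C, powImage h.2 B = f.2 '' {y | ∀ i, y i ∈ powImage (g i).2 B} := by
  -- `f` is composed with the `g i`, applied to pairwise disjoint blocks of variables.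
  obtain ⟨n, ⟨e⟩⟩ : ∃ n, Nonempty ((Σ i, Fin ((g i).1 + 1)) ≃ Fin (n + 1)) :=
    ⟨_, ⟨(Fintype.equivFin _).trans (finCongr (Nat.succ_pred Fintype.card_ne_zero).symm)⟩⟩
  refine ⟨⟨n, fun z => f.2 fun i => (g i).2 fun j => z (e ⟨i, j⟩)⟩,
    hC.2 _ _ _ hf _ fun i => hC.2 _ _ _ (hg i) _ fun j => hC.1 n (e ⟨i, j⟩), ?_⟩
  apply Set.Subset.antisymm
  · rintro _ ⟨z, hz, rfl⟩
    exact ⟨_, fun i => ⟨_, fun j => hz _, rfl⟩, rfl⟩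
  · rintro _ ⟨y, hy, rfl⟩
    choose x hxB hxy using hy
    let w : (Σ i, Fin ((g i).1 + 1)) → X := fun p => x p.1 p.2
    have hw (i) : (g i).2 (fun j => w (e.symm (e ⟨i, j⟩))) = y i := by
      simpa only [Equiv.symm_apply_apply] using hxy i
    exact ⟨fun k => w (e.symm k), fun k => hxB _ _, congrArg f.2 (funext hw)⟩

end Clones

section IdealClones

variable {X : Type u} {I : Set (Set X)}

theorem mem_idealClone {f : Ops X} : f ∈ idealClone I ↔ ∀ A ∈ I, powImage f.2 A ∈ I :=
  Iff.rfl

theorem unaryOp_mem_idealClone {g : X → X} :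
    unaryOp g ∈ idealClone I ↔ ∀ A ∈ I, g '' A ∈ I := by
  simp only [mem_idealClone, powImage_unaryOp]

theorem mem_idealClone_of_forall_mem_range (hI : IsLowerSet I) {f : Ops X}
    (hf : ∀ x, f.2 x ∈ Set.range x) : f ∈ idealClone I := by
  refine fun A hA => hI ?_ hA
  rintro _ ⟨x, hx, rfl⟩
  obtain ⟨i, hi⟩ := hf x
  exact hi ▸ hx i

theorem mem_idealClone_of_forall_mem (hI : IsLowerSet I) {A : Set X} (hA : A ∈ I) {f : Ops X}
    (hf : ∀ x, f.2 x ∈ A) : f ∈ idealClone I := by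
  refine fun B _ => hI ?_ hA
  rintro _ ⟨x, -, rfl⟩
  exact hf x

theorem isClone_idealClone (hI : IsLowerSet I) (hsup : SupClosed I) : IsClone (idealClone I) := by
  refine ⟨fun n k => mem_idealClone_of_forall_mem_range hI fun x => ⟨k, rfl⟩,
    fun n m f hf g hg A hA => ?_⟩
  have hunion : ⋃ i, powImage (g i) A ∈ I := hsup.iSup_mem_of_nonempty fun i => hg i A hA
  refine hI ?_ (hf _ hunion)
  rintro _ ⟨x, hx, rfl⟩
  exact ⟨fun i => g i x, fun i => Set.mem_iUnion.mpr ⟨i, x, hx, rfl⟩, rfl⟩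

theorem mem_of_finite_of_subset_sUnion (hI : IsLowerSet I) (hsup : SupClosed I)
    (hne : I.Nonempty) {A : Set X} (hA : A.Finite) (hAI : A ⊆ ⋃₀ I) : A ∈ I := by
  obtain ⟨B, hB, hAB⟩ :=
    hsup.directedOn.exists_mem_subset_of_finite_of_subset_sUnion hne hA hAI
  exact hI hAB hB

theorem mem_of_forall_unaryOp_mem_idealClone (hI : IsLowerSet I) {A B : Set X} (hA : A ∈ I)
    (hAinf : A.Infinite) (hB : B.Countable)
    (h : ∀ g : X → X, Set.range g ⊆ B → unaryOp g ∈ idealClone I) : B ∈ I := by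
  rcases B.eq_empty_or_nonempty with rfl | hne
  · exact hI (Set.empty_subset A) hA
  · obtain ⟨g, hgB, rfl⟩ := exists_range_subset_image_eq hAinf hB hne
    exact unaryOp_mem_idealClone.mp (h g hgB) A hA

theorem exists_notMem_forall_mem_cloneGen (hI : IsLowerSet I) {f : Ops X}
    (hf : f ∉ idealClone I) :
    ∃ B ∉ I, ∀ g : Ops X, (∀ x, g.2 x ∈ B) → g ∈ cloneGen (insert f (idealClone I)) := by
  rw [mem_idealClone] at hf
  push Not at hf
  obtain ⟨A, hA, hfA⟩ := hf
  have hsub := subset_cloneGen (insert f (idealClone I))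
  refine ⟨_, hfA, fun g hg => (isClone_cloneGen _).mem_of_forall_mem_powImage
    (hsub (Set.mem_insert _ _)) (fun k hk => ?_) hg⟩
  exact hsub (Set.mem_insert_of_mem _ (mem_idealClone_of_forall_mem hI hA hk))

theorem isPrecompleteClone_idealClone_of_powImage_eq_univ (hI : IsLowerSet I) (hsup : SupClosed I)
    (hne : idealClone I ≠ Set.univ)
    (h : ∀ B ∉ I, ∃ f ∈ idealClone I, powImage f.2 B = Set.univ) :
    IsPrecompleteClone (idealClone I) := by
  refine ⟨isClone_idealClone hI hsup, hne, fun f hf => Set.eq_univ_of_forall fun q => ?_⟩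
  obtain ⟨B, hB, hBgen⟩ := exists_notMem_forall_mem_cloneGen hI hf
  obtain ⟨k, hk, hkB⟩ := h B hB
  have hkgen := subset_cloneGen (insert f (idealClone I)) (Set.mem_insert_of_mem _ hk)
  exact (isClone_cloneGen _).mem_of_forall_mem_powImage hkgen hBgen fun _ => hkB ▸ trivial

end IdealClones

section PowersetClones

variable {X : Type u} {S : Set X}

theorem isLowerSet_powerset : IsLowerSet (𝒫 S) :=
  fun _ _ hBA hA => hBA.trans hA

theorem supClosed_powerset : SupClosed (𝒫 S) :=
  fun _ hA _ hB => Set.union_subset hA hB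

theorem mem_idealClone_powerset {f : Ops X} :
    f ∈ idealClone (𝒫 S) ↔ ∀ x, (∀ i, x i ∈ S) → f.2 x ∈ S := by
  constructor
  · exact fun hf x hx => hf S (Set.Subset.refl S) ⟨x, hx, rfl⟩
  · rintro hf A hA _ ⟨x, hx, rfl⟩
    exact hf x fun i => hA (hx i)

theorem idealClone_powerset_ne_univ (hS : S.Nonempty) (hS' : S ≠ Set.univ) :
    idealClone (𝒫 S) ≠ Set.univ := by
  obtain ⟨s, hs⟩ := hS
  obtain ⟨c, hc⟩ := (Set.ne_univ_iff_exists_notMem S).mp hS'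
  refine (Set.ne_univ_iff_exists_notMem _).mpr ⟨unaryOp fun _ => c, fun h => hc ?_⟩
  exact mem_idealClone_powerset.mp h (fun _ => s) fun _ => hs

theorem IsClone.eq_univ_of_const_mem {D : Set (Ops X)} (hD : IsClone D)
    (hSD : idealClone (𝒫 S) ⊆ D) (hS : S.Nonempty) {c : X} (hc : c ∉ S)
    (hcD : unaryOp (fun _ => c) ∈ D) : D = Set.univ := by
  classical
  obtain ⟨s, hs⟩ := hS
  refine Set.eq_univ_of_forall fun ⟨n, h⟩ => ?_
  -- `H` preserves `S`, and substituting `c` for its first variable recovers `h`.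
  let H : Ops X := ⟨n + 1, fun x => if x 0 ∈ S then s else h fun i => x i.succ⟩
  have hH : H ∈ D := hSD <| mem_idealClone_powerset.mpr fun x hx => by
    simpa only [H, hx 0, if_true] using hs
  have hconst : (⟨n, fun _ => c⟩ : Ops X) ∈ D :=
    hD.2 0 n _ hcD (fun _ x => x 0) fun _ => hD.1 n 0
  have hcomp := hD.2 _ n _ hH (Fin.cons (fun _ => c) fun i x => x i)
    (Fin.cases hconst fun i => hD.1 n i)
  simpa [H, hc] using hcomp

theorem isPrecompleteClone_idealClone_powerset (hS : S.Nonempty) (hS' : S ≠ Set.univ) :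
    IsPrecompleteClone (idealClone (𝒫 S)) := by
  refine ⟨isClone_idealClone isLowerSet_powerset supClosed_powerset,
    idealClone_powerset_ne_univ hS hS', fun f hf => ?_⟩
  obtain ⟨B, hB, hBgen⟩ := exists_notMem_forall_mem_cloneGen isLowerSet_powerset hf
  obtain ⟨c, hcB, hcS⟩ := Set.not_subset.mp hB
  exact (isClone_cloneGen _).eq_univ_of_const_mem
    ((Set.subset_insert _ _).trans (subset_cloneGen _)) hS hcS (hBgen _ fun _ => hcB)

end PowersetClones

section ProperSupport

variable {X : Type u} {I : Set (Set X)}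

theorem idealClone_subset_idealClone_powerset_sUnion (hI : IsLowerSet I) (hsup : SupClosed I) :
    idealClone I ⊆ idealClone (𝒫 ⋃₀ I) := by
  refine fun f hf => mem_idealClone_powerset.mpr fun x hx => ?_
  obtain ⟨A, hA, -⟩ := hx 0
  have hrange : Set.range x ∈ I := mem_of_finite_of_subset_sUnion hI hsup ⟨A, hA⟩
    (Set.finite_range x) (Set.range_subset_iff.mpr hx)
  exact ⟨_, hf _ hrange, x, Set.mem_range_self, rfl⟩

theorem idealClone_eq_idealClone_powerset_sUnion_iff (hI : IsLowerSet I) (hsup : SupClosed I)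
    (hcount : (⋃₀ I).Countable) :
    idealClone I = idealClone (𝒫 ⋃₀ I) ↔ (∀ A ∈ I, A.Finite) ∨ ∀ B ⊆ ⋃₀ I, B ∈ I := by
  constructor
  · refine fun heq => or_iff_not_imp_left.mpr fun hfin B hB => ?_
    push Not at hfin
    obtain ⟨A, hA, hAinf⟩ := hfin
    refine mem_of_forall_unaryOp_mem_idealClone hI hA hAinf (hcount.mono hB) fun g hg => ?_
    rw [heq]
    exact mem_idealClone_of_forall_mem isLowerSet_powerset hB fun x => hg ⟨x 0, rfl⟩
  · refine fun h => (idealClone_subset_idealClone_powerset_sUnion hI hsup).antisymm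
      fun f hf A hA => ?_
    have hfA : powImage f.2 A ⊆ ⋃₀ I := hf A (Set.subset_sUnion_of_mem hA)
    rcases h with hfin | hall
    · exact mem_of_finite_of_subset_sUnion hI hsup ⟨A, hA⟩ (finite_powImage (hfin A hA) _) hfA
    · exact hall _ hfA

theorem isPrecompleteClone_idealClone_iff_eq (hI : IsLowerSet I) (hsup : SupClosed I)
    (hne : (⋃₀ I).Nonempty) (hne' : ⋃₀ I ≠ Set.univ) :
    IsPrecompleteClone (idealClone I) ↔ idealClone I = idealClone (𝒫 ⋃₀ I) := by
  have hpow := isPrecompleteClone_idealClone_powerset hne hne'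
  exact ⟨fun hpre => hpre.eq_of_subset hpow.1
    (idealClone_subset_idealClone_powerset_sUnion hI hsup) hpow.2.1, fun heq => heq ▸ hpow⟩

end ProperSupport

/-- The sets covered by `f[Bⁿ]` for some operation `f ∈ C`. When `C` is the clone of an ideal and
`B` has at least two elements, these sets form an ideal that is preserved by all of `C`. -/
def imageIdeal {X : Type u} (C : Set (Ops X)) (B : Set X) : Set (Set X) :=
  {Y | ∃ f ∈ C, Y ⊆ powImage f.2 B}

section ImageIdeals

variable {X : Type u} {C : Set (Ops X)} {I : Set (Set X)} {B : Set X}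

theorem isLowerSet_imageIdeal : IsLowerSet (imageIdeal C B) :=
  fun _ _ hZY ⟨f, hf, hY⟩ => ⟨f, hf, hZY.trans hY⟩

theorem univ_mem_imageIdeal :
    Set.univ ∈ imageIdeal C B ↔ ∃ f ∈ C, powImage f.2 B = Set.univ :=
  exists_congr fun _ => and_congr_right fun _ => Set.univ_subset_iff

theorem IsClone.self_mem_imageIdeal (hC : IsClone C) : B ∈ imageIdeal C B :=
  ⟨unaryOp id, hC.1 0 0, by rw [powImage_unaryOp, Set.image_id]⟩

theorem IsClone.subset_idealClone_imageIdeal (hC : IsClone C) :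
    C ⊆ idealClone (imageIdeal C B) := by
  rintro k hk Y ⟨f, hf, hY⟩
  obtain ⟨h, hh, hhB⟩ := hC.exists_powImage_eq_image hk (g := fun _ => f) (fun _ => hf) B
  exact ⟨h, hh, hhB ▸ Set.image_mono fun y hy i => hY (hy i)⟩

theorem supClosed_imageIdeal (hI : IsLowerSet I) (hsup : SupClosed I) (hB : B.Nontrivial) :
    SupClosed (imageIdeal (idealClone I) B) := by
  classical
  rintro Y ⟨f, hf, hY⟩ Z ⟨g, hg, hZ⟩
  obtain ⟨b, hb, c, hc, hbc⟩ := hB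
  let sel : Ops X := ⟨2, fun x => if x 0 = b then x 1 else x 2⟩
  have hsel : sel ∈ idealClone I := mem_idealClone_of_forall_mem_range hI fun x => by
    by_cases hx : x 0 = b
    · exact ⟨1, (if_pos hx).symm⟩
    · exact ⟨2, (if_neg hx).symm⟩
  have hC := isClone_idealClone hI hsup
  have hargs : ∀ i, (![unaryOp id, f, g] : Fin 3 → Ops X) i ∈ idealClone I :=
    Fin.forall_fin_succ.mpr ⟨hC.1 0 0, Fin.forall_fin_two.mpr ⟨hf, hg⟩⟩
  obtain ⟨h, hh, hhB⟩ := hC.exists_powImage_eq_image hsel hargs B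
  have hselect {a y z : X} (ha : a ∈ B) (hy : y ∈ powImage f.2 B) (hz : z ∈ powImage g.2 B) :
      (if a = b then y else z) ∈ powImage h.2 B := by
    rw [hhB]
    have ha' : a ∈ powImage (unaryOp id).2 B := by rwa [powImage_unaryOp, Set.image_id]
    exact ⟨![a, y, z], Fin.forall_fin_succ.mpr ⟨ha', Fin.forall_fin_two.mpr ⟨hy, hz⟩⟩, rfl⟩
  have hf_ne : (powImage f.2 B).Nonempty := ⟨_, fun _ => b, fun _ => hb, rfl⟩
  have hg_ne : (powImage g.2 B).Nonempty := ⟨_, fun _ => b, fun _ => hb, rfl⟩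
  refine ⟨h, hh, Set.union_subset (fun y hy => ?_) fun z hz => ?_⟩
  · simpa using hselect hb (hY hy) hg_ne.some_mem
  · simpa [hbc.symm] using hselect hc hf_ne.some_mem (hZ hz)

theorem exists_powImage_eq_univ_of_isPrecompleteClone [Countable X] (hI : IsLowerSet I)
    (hsup : SupClosed I) (hpre : IsPrecompleteClone (idealClone I)) {A : Set X} (hA : A ∈ I)
    (hAinf : A.Infinite) (hBinf : B.Infinite) (hB : B ∉ I) :
    ∃ f ∈ idealClone I, powImage f.2 B = Set.univ := by
  rw [← univ_mem_imageIdeal]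
  set J := imageIdeal (idealClone I) B
  have hJ : IsLowerSet J := isLowerSet_imageIdeal
  have hBJ : B ∈ J := hpre.1.self_mem_imageIdeal
  by_contra hJuniv
  have hne : idealClone J ≠ Set.univ := fun h => hJuniv <|
    mem_of_forall_unaryOp_mem_idealClone hJ hBJ hBinf Set.countable_univ fun g _ => h ▸ trivial
  have heq : idealClone I = idealClone J :=
    hpre.eq_of_subset (isClone_idealClone hJ (supClosed_imageIdeal hI hsup hBinf.nontrivial))
      hpre.1.subset_idealClone_imageIdeal hne
  refine hB (mem_of_forall_unaryOp_mem_idealClone hI hA hAinf B.to_countable fun g hg => ?_)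
  rw [heq]
  exact mem_idealClone_of_forall_mem hJ hBJ fun x => hg ⟨x 0, rfl⟩

end ImageIdeals

section FullSupport

variable {X : Type u} [Countable X] {I : Set (Set X)}

theorem idealClone_ne_univ_iff (hI : IsLowerSet I) (hsup : SupClosed I) (hs : ⋃₀ I = Set.univ) :
    idealClone I ≠ Set.univ ↔ (∃ B ∈ I, B.Infinite) ∧ ∃ B : Set X, B.Infinite ∧ B ∉ I := by
  have huniv : idealClone (𝒫 ⋃₀ I) = Set.univ :=
    Set.eq_univ_of_forall fun f => mem_idealClone_powerset.mpr fun x _ => hs ▸ trivial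
  rw [Ne, ← huniv, idealClone_eq_idealClone_powerset_sUnion_iff hI hsup (Set.to_countable _),
    not_or]
  push Not
  refine and_congr_right fun ⟨A, hA, _⟩ => ⟨fun ⟨B, hBI, hB⟩ => ⟨B, fun hfin => hB ?_, hB⟩,
    fun ⟨B, _, hB⟩ => ⟨B, hs ▸ Set.subset_univ B, hB⟩⟩
  exact mem_of_finite_of_subset_sUnion hI hsup ⟨A, hA⟩ hfin hBI

theorem isPrecompleteClone_idealClone_iff_ne_univ_and (hI : IsLowerSet I) (hsup : SupClosed I)
    (hs : ⋃₀ I = Set.univ) :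
    IsPrecompleteClone (idealClone I) ↔ idealClone I ≠ Set.univ ∧
      ∀ B ∉ I, ∃ f ∈ idealClone I, powImage f.2 B = Set.univ := by
  refine ⟨fun hpre => ⟨hpre.2.1, fun B hB => ?_⟩,
    fun ⟨hne, h⟩ => isPrecompleteClone_idealClone_of_powImage_eq_univ hI hsup hne h⟩
  obtain ⟨⟨A, hA, hAinf⟩, -⟩ := (idealClone_ne_univ_iff hI hsup hs).mp hpre.2.1
  have hBinf : B.Infinite := fun hfin => hB <|
    mem_of_finite_of_subset_sUnion hI hsup ⟨A, hA⟩ hfin (hs ▸ Set.subset_univ B)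
  exact exists_powImage_eq_univ_of_isPrecompleteClone hI hsup hpre hA hAinf hBinf hB

end FullSupport

theorem stmt2_general {X : Type u} (I : Set (Set X)) (hI : IsLowerSet I) (hsup : SupClosed I)
    (hcount : (⋃₀ I).Countable) :
    ((⋃₀ I ≠ ∅ ∧ ⋃₀ I ≠ Set.univ) →
      (IsPrecompleteClone (idealClone I) ↔
        ((∀ A ∈ I, A.Finite) ∨ ∀ B ⊆ ⋃₀ I, B ∈ I))) ∧
    (⋃₀ I = Set.univ →
      (IsPrecompleteClone (idealClone I) ↔
        ((∃ B ∈ I, B.Infinite) ∧ (∃ B : Set X, B.Infinite ∧ B ∉ I) ∧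
          ∀ B : Set X, B ∉ I → ∃ f ∈ idealClone I, powImage f.2 B = Set.univ))) := by
  refine ⟨fun ⟨hne, hne'⟩ => ?_, fun hs => ?_⟩
  · rw [isPrecompleteClone_idealClone_iff_eq hI hsup (Set.nonempty_iff_ne_empty.mpr hne) hne',
      idealClone_eq_idealClone_powerset_sUnion_iff hI hsup hcount]
  · have : Countable X := Set.countable_univ_iff.mp (hs ▸ hcount)
    rw [isPrecompleteClone_idealClone_iff_ne_univ_and hI hsup hs,
      idealClone_ne_univ_iff hI hsup hs, and_assoc]

/-- **Czédli–Heindorf**: precompleteness criterion for ideal clones `C_I` on a countably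
infinite base set, depending on the support of the ideal. -/
theorem stmt2 {X : Type u} [Countable X] [Infinite X] (I : Set (Set X))
    (hdown : ∀ A ∈ I, ∀ B ⊆ A, B ∈ I)
    (hunion : ∀ A ∈ I, ∀ B ∈ I, A ∪ B ∈ I) :
    ((⋃₀ I ≠ ∅ ∧ ⋃₀ I ≠ Set.univ) →
      (IsPrecompleteClone (idealClone I) ↔
        ((∀ A ∈ I, A.Finite) ∨ ∀ B ⊆ ⋃₀ I, B ∈ I))) ∧
    (⋃₀ I = Set.univ →
      (IsPrecompleteClone (idealClone I) ↔
        ((∃ B ∈ I, B.Infinite) ∧ (∃ B : Set X, B.Infinite ∧ B ∉ I) ∧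
          ∀ B : Set X, B ∉ I →
            ∃ f ∈ idealClone I, f.2 '' {x : Fin (f.1 + 1) → X | ∀ i, x i ∈ B} = Set.univ))) :=
  stmt2_general I (fun A B hBA hA => hdown A hA B hBA) (fun A hA B hB => hunion A hA B hB)
    (Set.to_countable _)
end

section
/- Let X be a finite set with at least 2 elements. For 1 ≤ n ≤ |X| let K_n be the set of all operations on X that are either essentially unary or take at most n values, and let B (Burle's clone) be the set of all operations that are either essentially unary or quasilinear. Then the interval [⟨O^(1)⟩, O] of the clone lattice is exactly the chain ⟨O^(1)⟩ = K_1 ⊊ B ⊊ K_2 ⊊ K_3 ⊊ … ⊊ K_{|X|} = O; that is, each of K_1, B, K_2, …, K_{|X|} is a clone, these inclusions are strict, and every clone on X containing all unary operations equals one of them. -/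
universe u v

open Cardinal

/-- An operation is essentially unary iff it depends on at most one variable. -/
def EssentiallyUnary {X : Type u} (f : Ops X) : Prop :=
  ∃ (F : X → X) (k : Fin (f.1 + 1)), ∀ x, f.2 x = F (x k)

/-- An operation is quasilinear iff it is of the form
`φ₀ (φ₁ x₁ + ⋯ + φₙ xₙ)` with the sum taken modulo 2. -/
def Quasilinear {X : Type u} (f : Ops X) : Prop :=
  ∃ (φ₀ : ZMod 2 → X) (φ : Fin (f.1 + 1) → X → ZMod 2),
    ∀ x, f.2 x = φ₀ (∑ i, φ i (x i))

/-- `K n` : operations that are essentially unary or take at most `n` values. -/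
def Kset (X : Type u) (n : ℕ) : Set (Ops X) :=
  {f : Ops X | EssentiallyUnary f ∨ (Set.range f.2).ncard ≤ n}

/-- Burle's clone: operations that are essentially unary or quasilinear. -/
def BurleClone (X : Type u) : Set (Ops X) :=
  {f : Ops X | EssentiallyUnary f ∨ Quasilinear f}

/-- The set of all unary operations, inside `Ops X`. -/
def unarySet (X : Type u) : Set (Ops X) := Set.range (unaryOp : (X → X) → Ops X)

/-!
Let `C` be a clone containing all unary operations. Since every unary map is available, a
`{0, 1}`-valued function `P` can be recoded at will, and what matters is which such functions are
represented in `C` and under which Boolean operations they are closed.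

An operation that is not essentially unary depends on both sides of a splitting of its arguments
into one coordinate and the remaining ones, hence so does its restriction to some `2 × 2`
subrectangle, suitably recoded. If one such table has an odd number of ones, affine changes of
variables turn it into multiplication, which generates all Boolean functions and yields `K₂`.
Otherwise the table is addition up to a constant, which yields `B`. An operation outside `B` always
has an odd rectangle: if it takes two values, even rectangles everywhere would make it quasilinear,
and if it takes three, it takes three distinct values on three corners of some rectangle, and one of
these is taken exactly once there.

The same three corners lift `Kₘ` to `Kₘ₊₁`: choose `m + 1` arguments of an operation `f`, the three
corners among them, on which `f` is injective. In every coordinate two of the corners agree, so each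
coordinate of a map into this set of arguments takes at most `m` values, while `f` recovers `m + 1`.
-/

open Function

/-! ### Functions of several variables -/

section Functions

lemma eq_of_forall_update_eq {ι Y : Type*} {α : ι → Type*} [Finite ι] [DecidableEq ι]
    {f : (∀ i, α i) → Y} (h : ∀ i a b p, f (update p i a) = f (update p i b))
    (x y : ∀ i, α i) : f x = f y := by
  have := Fintype.ofFinite ι
  have piecewise_eq (s : Finset ι) : f (s.piecewise x y) = f y := by
    induction s using Finset.induction_on with
    | empty => rw [Finset.piecewise_empty]
    | insert i s _ ih =>
      rw [Finset.piecewise_insert, h i (x i) (s.piecewise x y i), update_eq_self, ih]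
  simpa only [Finset.piecewise_univ] using piecewise_eq Finset.univ

/-- `P` is a sum of functions of one variable each. This is encoded by the condition that the
effect of a change of one argument does not depend on the other arguments. -/
def IsAdditive {ι G : Type*} {α : ι → Type*} [DecidableEq ι] [AddCommGroup G]
    (P : (∀ i, α i) → G) : Prop :=
  ∀ i a b p q, P (update p i a) - P (update p i b) = P (update q i a) - P (update q i b)

section IsAdditive

variable {ι G : Type*} {α : ι → Type*} [DecidableEq ι] [AddCommGroup G]

lemma isAdditive_apply (i : ι) (φ : α i → G) : IsAdditive fun x : ∀ i, α i => φ (x i) := by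
  intro j a b p q
  obtain rfl | hij := eq_or_ne i j
  · simp only [update_self]
  · simp only [update_of_ne hij, sub_self]

lemma IsAdditive.sum {κ : Type*} {s : Finset κ} {P : κ → (∀ i, α i) → G}
    (hP : ∀ k ∈ s, IsAdditive (P k)) : IsAdditive fun x => ∑ k ∈ s, P k x := by
  intro i a b p q
  simp only [← Finset.sum_sub_distrib]
  exact Finset.sum_congr rfl fun k hk => hP k hk i a b p q

lemma IsAdditive.sub {P Q : (∀ i, α i) → G} (hP : IsAdditive P) (hQ : IsAdditive Q) :
    IsAdditive fun x => P x - Q x := by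
  intro i a b p q
  dsimp only
  rw [sub_sub_sub_comm, hP i a b p q, hQ i a b p q, sub_sub_sub_comm]

lemma IsAdditive.eq_add_sum [Fintype ι] {P : (∀ i, α i) → G} (hP : IsAdditive P)
    (o x : ∀ i, α i) : P x = P o + ∑ i, (P (update o i (x i)) - P o) := by
  let S (x : ∀ i, α i) : G := ∑ i, (P (update o i (x i)) - P o)
  have sub_S : IsAdditive fun x => P x - S x :=
    hP.sub (.sum fun i _ => isAdditive_apply i fun a => P (update o i a) - P o)
  have S_o : S o = 0 := by simp [S]
  have S_update (i a) : S (update o i a) = P (update o i a) - P o := by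
    refine (Fintype.sum_eq_single i fun j hj => ?_).trans ?_
    · rw [update_of_ne hj, update_eq_self, sub_self]
    · rw [update_self]
  have sub_S_eq : P x - S x = P o - S o := by
    refine eq_of_forall_update_eq (f := fun x => P x - S x) (fun i a b p => ?_) x o
    refine sub_eq_zero.mp ((sub_S i a b p o).trans ?_)
    simp only [S_update, sub_sub_cancel, sub_self]
  rw [S_o, sub_zero] at sub_S_eq
  exact sub_eq_iff_eq_add.mp sub_S_eq

lemma IsAdditive.comp_zmodTwo {P : (∀ i, α i) → ZMod 2} (hP : IsAdditive P)
    (χ : ZMod 2 → ZMod 2) : IsAdditive fun x => χ (P x) := by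
  have affine : ∀ (χ : ZMod 2 → ZMod 2) (u v w z : ZMod 2),
      u - v = w - z → χ u - χ v = χ w - χ z := by decide
  exact fun i a b p q => affine χ _ _ _ _ (hP i a b p q)

end IsAdditive

variable {A B Y : Type*} {G : A → B → Y}

/-- The function `G` of two arguments depends on both of them. -/
def DependsOnBoth {A B Y : Type*} (G : A → B → Y) : Prop :=
  (∃ a a' b, G a b ≠ G a' b) ∧ ∃ a b b', G a b ≠ G a b'

lemma DependsOnBoth.exists_corner (hG : DependsOnBoth G) :
    ∃ a a' b b', G a b ≠ G a' b ∧ G a b ≠ G a b' := by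
  obtain ⟨⟨a, a', b, ha⟩, c, d, d', hc⟩ := hG
  by_cases row : ∃ y, G a b ≠ G a y ∨ G a' b ≠ G a' y
  · obtain ⟨y, hy | hy⟩ := row
    · exact ⟨a, a', b, y, ha, hy⟩
    · exact ⟨a', a, b, y, ha.symm, hy⟩
  · push Not at row
    -- Rows `a` and `a'` are constant and distinct, so one of them differs from row `c` at `d`.
    rw [(row d).1, (row d).2] at ha
    by_cases hca : G c d = G a d
    · exact ⟨c, a', d, d', hca ▸ ha, hc⟩
    · exact ⟨c, a, d, d', hca, hc⟩

lemma DependsOnBoth.exists_boolean_rectangle (hG : DependsOnBoth G) :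
    ∃ (α : ZMod 2 → A) (β : ZMod 2 → B) (ψ : Y → ZMod 2),
      DependsOnBoth fun s t => ψ (G (α s) (β t)) := by
  classical
  obtain ⟨a, a', b, b', hab, hab'⟩ := hG.exists_corner
  refine ⟨![a, a'], ![b, b'], fun y => if y = G a b then 1 else 0, ⟨0, 1, 0, ?_⟩, 0, 0, 1, ?_⟩
  · simp [hab.symm]
  · simp [hab'.symm]

/-- Jabłoński's lemma. -/
lemma DependsOnBoth.exists_three_corners (hG : DependsOnBoth G)
    (three : ∀ u v, ∃ a b, G a b ≠ u ∧ G a b ≠ v) :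
    ∃ a a' b b', G a b ≠ G a' b ∧ G a b ≠ G a b' ∧ G a' b ≠ G a b' := by
  obtain ⟨⟨a, a', b, hab⟩, e, y, y', hey⟩ := hG
  obtain ⟨c, d, hca, hca'⟩ := three (G a b) (G a' b)
  by_contra! corner
  have row_constant (x p q : A) (y : B) (hpq : G p y ≠ G q y) (hp : G x y ≠ G p y)
      (hq : G x y ≠ G q y) (y' : B) : G x y' = G x y := by
    by_contra hne
    exact hpq ((corner x p y y' hp (Ne.symm hne)).trans (corner x q y y' hq (Ne.symm hne)).symm)
  have had : G a d = G a b := by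
    by_contra h
    have had' : G a' b = G a d := corner a a' b d hab (Ne.symm h)
    exact hca (corner a c d b (had' ▸ hca'.symm) h)
  have ha'd : G a' d = G a' b := by
    by_contra h
    have ha'd' : G a b = G a' d := corner a' a b d hab.symm (Ne.symm h)
    exact hca' (corner a' c d b (ha'd' ▸ hca.symm) h)
  rw [← had] at hab hca
  rw [← ha'd] at hab hca'
  have row_a := row_constant a a' c d hca'.symm hab hca.symm
  have row_a' := row_constant a' a c d hca.symm hab.symm hca'.symm
  have row_c := row_constant c a a' d hab hca hca'
  -- Every column now contains three values, so some two of them differ from the entry of row `e`.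
  have row_e : G e y' = G e y := by
    have haa' := row_constant e a a' y (by rwa [row_a, row_a'])
    have hac := row_constant e a c y (by rw [row_a, row_c]; exact hca.symm)
    have ha'c := row_constant e a' c y (by rw [row_a', row_c]; exact hca'.symm)
    by_cases hea : G e y = G a y
    · refine ha'c ?_ ?_ y' <;> rw [hea, row_a]
      · rwa [row_a']
      · rw [row_c]; exact hca.symm
    · by_cases hea' : G e y = G a' y
      · refine hac hea ?_ y'
        rw [hea', row_a', row_c]
        exact hca'.symm
      · exact haa' hea hea' y'
  exact hey row_e.symm

lemma exists_odd_indicator {u v w : Y} (huv : u ≠ v) (huw : u ≠ w) (hvw : v ≠ w) (z : Y) :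
    ∃ ψ : Y → ZMod 2, ψ u + ψ v + ψ w + ψ z = 1 := by
  classical
  by_cases hz : z = u
  · exact ⟨fun y => if y = v then 1 else 0, by simp [hz, huv, hvw.symm]⟩
  · exact ⟨fun y => if y = u then 1 else 0, by simp [hz, huv.symm, huw.symm]⟩

lemma exists_mapsTo_leftInvOn_of_ncard_le {Z : Type*} [Nonempty Y] {s : Set Y} {t : Set Z}
    (hs : s.Finite) (ht : t.Finite) (ht' : t.Nonempty) (h : s.ncard ≤ t.ncard) :
    ∃ (ψ : Y → Z) (φ : Z → Y), (∀ y ∈ s, ψ y ∈ t) ∧ ∀ y ∈ s, φ (ψ y) = y := by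
  have := ht'.to_type
  obtain ⟨ψ, hψt, hψ⟩ := hs.exists_injOn_of_encard_le (t := t)
    (by rw [← hs.cast_ncard_eq, ← ht.cast_ncard_eq]; exact_mod_cast h)
  exact ⟨ψ, invFunOn ψ s, hψt, hψ.leftInvOn_invFunOn⟩

lemma exists_zmodTwo_encoding [Finite Y] [Nonempty Y] {f : A → Y}
    (hf : (Set.range f).ncard ≤ 2) :
    ∃ (ψ : Y → ZMod 2) (φ : ZMod 2 → Y), ∀ x, φ (ψ (f x)) = f x := by
  obtain ⟨ψ, φ, -, hφ⟩ := exists_mapsTo_leftInvOn_of_ncard_le (t := (Set.univ : Set (ZMod 2)))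
    (Set.toFinite (Set.range f)) Set.finite_univ Set.univ_nonempty
    (by rwa [Set.ncard_univ, Nat.card_zmod])
  exact ⟨ψ, φ, fun x => hφ _ ⟨x, rfl⟩⟩

lemma exists_ne_ne_of_two_lt_ncard_range {f : A → Y} (h : 2 < (Set.range f).ncard) (u v : Y) :
    ∃ x, f x ≠ u ∧ f x ≠ v := by
  have pair_le : ({u, v} : Set Y).ncard ≤ 2 := by
    simpa only [Set.ncard_singleton] using Set.ncard_insert_le u {v}
  obtain ⟨_, ⟨x, rfl⟩, hx⟩ := Set.exists_mem_notMem_of_ncard_lt_ncard (pair_le.trans_lt h)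
  exact ⟨x, by simpa only [Set.mem_insert_iff, Set.mem_singleton_iff, not_or] using hx⟩

lemma exists_injOn_ncard_eq {f : A → Y} {t : Set A} (ht : Set.InjOn f t) {m : ℕ}
    (htm : t.ncard ≤ m) (hm : m ≤ (Set.range f).ncard) :
    ∃ S, t ⊆ S ∧ Set.InjOn f S ∧ S.ncard = m := by
  obtain ⟨S, htS, -, hSf, hS⟩ := ht.exists_subset_injOn_subset_range_eq (Set.subset_univ t)
  rw [← Set.image_univ, ← hSf, hS.ncard_image] at hm
  obtain ⟨R, htR, hRS, hR⟩ := Set.exists_subsuperset_card_eq htS htm hm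
  exact ⟨R, htR, hS.mono hRS, hR⟩

lemma ncard_range_comp_le {T : Type*} [Finite T] (φ : T → Y) (P : A → T) :
    (Set.range fun x => φ (P x)).ncard ≤ Nat.card T :=
  (Set.ncard_le_ncard (Set.range_comp_subset_range P φ) (Set.finite_range φ)).trans
    (Finite.card_range_le φ)

end Functions

/-! ### Boolean tables -/

section Boolean

variable {β : ZMod 2 → ZMod 2 → ZMod 2}

/-- The Boolean table `β` has an odd number of entries equal to one. -/
def IsOddTable (β : ZMod 2 → ZMod 2 → ZMod 2) : Prop :=
  β 0 0 + β 0 1 + β 1 0 + β 1 1 = 1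

lemma IsOddTable.exists_affine_eq_mul (h : IsOddTable β) :
    ∃ r s t : ZMod 2, ∀ x y, r + β (s + x) (t + y) = x * y := by
  revert β; unfold IsOddTable; decide

lemma exists_const_add_eq_add (h : ¬IsOddTable β) (hβ : DependsOnBoth β) :
    ∃ r : ZMod 2, ∀ x y, r + β x y = x + y := by
  revert β; unfold IsOddTable DependsOnBoth; decide

end Boolean

/-! ### Functions represented in a clone -/

section Representable

variable {X : Type u} {C : Set (Ops X)} {S T : Type*} {k n : ℕ}

/-- The function `P` of `k + 1` elements of `X`, with values in an arbitrary type, is represented in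
`C`: encoding its values by elements of `X` in any way gives an operation in `C`. -/
def Representable (C : Set (Ops X)) (P : (Fin (k + 1) → X) → T) : Prop :=
  ∀ φ : T → X, (⟨k, fun x => φ (P x)⟩ : Ops X) ∈ C

/-- The functions with values in `T` that are represented in `C` are closed under `β`. -/
def ClosedUnder (C : Set (Ops X)) (β : T → T → T) : Prop :=
  ∀ (k : ℕ) (P Q : (Fin (k + 1) → X) → T), Representable C P → Representable C Q →
    Representable C fun x => β (P x) (Q x)

lemma Representable.comp {P : (Fin (k + 1) → X) → T} (hP : Representable C P) (ψ : T → S) :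
    Representable C fun x => ψ (P x) :=
  fun φ => hP (φ ∘ ψ)

lemma Representable.mem {P : (Fin (k + 1) → X) → T} (hP : Representable C P)
    {f : (Fin (k + 1) → X) → X} {φ : T → X} (hf : ∀ x, f x = φ (P x)) :
    (⟨k, f⟩ : Ops X) ∈ C := by
  obtain rfl : f = fun x => φ (P x) := funext hf
  exact hP φ

lemma IsClone.representable (hC : IsClone C) (hU : unarySet X ⊆ C) {g : (Fin (k + 1) → X) → X}
    (hg : (⟨k, g⟩ : Ops X) ∈ C) : Representable C g :=
  fun φ => hC.2 0 k (fun x => φ (x 0)) (hU ⟨φ, rfl⟩) (fun _ => g) fun _ => hg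

lemma IsClone.representable_apply (hC : IsClone C) (hU : unarySet X ⊆ C) (i : Fin (k + 1))
    (ψ : X → T) : Representable C fun x => ψ (x i) :=
  (hC.representable hU (hC.1 k i)).comp ψ

lemma IsClone.representable_const (hC : IsClone C) (hU : unarySet X ⊆ C) (t : T) :
    Representable C fun _ : Fin (k + 1) → X => t :=
  hC.representable_apply hU 0 fun _ => t

lemma IsClone.mem_of_essentiallyUnary (hC : IsClone C) (hU : unarySet X ⊆ C) {f : Ops X}
    (hf : EssentiallyUnary f) : f ∈ C := by
  obtain ⟨n, f⟩ := f
  obtain ⟨F, i, hF⟩ := hf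
  exact (hC.representable_apply hU i id).mem hF

lemma IsClone.representable_apply_update (hC : IsClone C) (hU : unarySet X ⊆ C)
    {f : (Fin (n + 1) → X) → X} (hf : (⟨n, f⟩ : Ops X) ∈ C) (i : Fin (n + 1))
    {P : (Fin (k + 1) → X) → S} {Q : (Fin (k + 1) → X) → T} (hP : Representable C P)
    (hQ : Representable C Q) (α : S → X) (π : T → Fin (n + 1) → X) :
    Representable C fun x => f (update (π (Q x)) i (α (P x))) := by
  refine hC.representable hU
    (hC.2 n k f hf (fun j x => update (π (Q x)) i (α (P x)) j) fun j => ?_)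
  obtain rfl | hj := eq_or_ne j i
  · simpa only [update_self] using hP α
  · simpa only [update_of_ne hj] using hQ fun t => π t j

lemma IsClone.closedUnder_table (hC : IsClone C) (hU : unarySet X ⊆ C)
    {f : (Fin (n + 1) → X) → X} (hf : (⟨n, f⟩ : Ops X) ∈ C) (i : Fin (n + 1)) (α : T → X)
    (π : T → Fin (n + 1) → X) (ψ : X → T) :
    ClosedUnder C fun s t => ψ (f (update (π t) i (α s))) :=
  fun _ _ _ hP hQ => (hC.representable_apply_update hU hf i hP hQ α π).comp ψ

lemma IsClone.representable_of_injOn [Nonempty X] (hC : IsClone C) (hU : unarySet X ⊆ C)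
    {f : (Fin (n + 1) → X) → X} (hf : (⟨n, f⟩ : Ops X) ∈ C) {A : Set (Fin (n + 1) → X)}
    (hfA : Set.InjOn f A) {P : (Fin (k + 1) → X) → Fin (n + 1) → X} (hPA : ∀ x, P x ∈ A)
    (hP : ∀ j, (⟨k, fun x => P x j⟩ : Ops X) ∈ C) : Representable C P := by
  have decode (x) : invFunOn f A (f (P x)) = P x := hfA.leftInvOn_invFunOn (hPA x)
  simpa only [decode] using
    (hC.representable hU (hC.2 n k f hf (fun j x => P x j) hP)).comp (invFunOn f A)

end Representable

section BooleanRepresentable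

variable {X : Type u} {C : Set (Ops X)} {k : ℕ} {β : ZMod 2 → ZMod 2 → ZMod 2}

lemma ClosedUnder.mul_of_isOddTable (hβ : ClosedUnder C β) (h : IsOddTable β) :
    ClosedUnder C ((· * ·) : ZMod 2 → ZMod 2 → ZMod 2) := by
  obtain ⟨r, s, t, hrst⟩ := h.exists_affine_eq_mul
  intro k P Q hP hQ
  simpa only [hrst] using (hβ k _ _ (hP.comp (s + ·)) (hQ.comp (t + ·))).comp (r + ·)

lemma ClosedUnder.add_of_mul (hmul : ClosedUnder C ((· * ·) : ZMod 2 → ZMod 2 → ZMod 2)) :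
    ClosedUnder C ((· + ·) : ZMod 2 → ZMod 2 → ZMod 2) := by
  have add_eq : ∀ x y : ZMod 2, 1 + (1 + x * (1 + y)) * (1 + (1 + x) * y) = x + y := by decide
  intro k P Q hP hQ
  have left := (hmul k _ _ hP (hQ.comp (1 + ·))).comp (1 + ·)
  have right := (hmul k _ _ (hP.comp (1 + ·)) hQ).comp (1 + ·)
  simpa only [add_eq] using (hmul k _ _ left right).comp (1 + ·)

lemma ClosedUnder.add_of_dependsOnBoth (hβ : ClosedUnder C β) (h : DependsOnBoth β) :
    ClosedUnder C ((· + ·) : ZMod 2 → ZMod 2 → ZMod 2) := by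
  by_cases odd : IsOddTable β
  · exact (hβ.mul_of_isOddTable odd).add_of_mul
  · obtain ⟨r, hr⟩ := exists_const_add_eq_add odd h
    intro k P Q hP hQ
    simpa only [hr] using (hβ k P Q hP hQ).comp (r + ·)

@[to_additive]
lemma IsClone.representable_prod {M ι : Type*} [CommMonoid M] (hC : IsClone C)
    (hU : unarySet X ⊆ C) (hmul : ClosedUnder C ((· * ·) : M → M → M)) (s : Finset ι)
    {P : ι → (Fin (k + 1) → X) → M} (hP : ∀ i, Representable C (P i)) :
    Representable C fun x => ∏ i ∈ s, P i x := by
  classical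
  induction s using Finset.induction_on with
  | empty => simpa only [Finset.prod_empty] using hC.representable_const hU 1
  | insert i s hi ih => simpa only [Finset.prod_insert hi] using hmul k _ _ (hP i) ih

lemma IsClone.representable_of_mul [Finite X] (hC : IsClone C) (hU : unarySet X ⊆ C)
    (hmul : ClosedUnder C ((· * ·) : ZMod 2 → ZMod 2 → ZMod 2)) (P : (Fin (k + 1) → X) → ZMod 2) :
    Representable C P := by
  classical
  have := Fintype.ofFinite X
  have normal_form (x) : ∑ y, P y * ∏ i, (if x i = y i then 1 else 0) = P x := by
    simp [Fintype.prod_boole, ← funext_iff]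
  suffices Representable C fun x => ∑ y, P y * ∏ i, (if x i = y i then 1 else 0) by
    simpa only [normal_form] using this
  refine hC.representable_sum hU hmul.add_of_mul _ fun y => ?_
  exact (hC.representable_prod hU hmul _ fun i =>
    hC.representable_apply hU i fun a => if a = y i then 1 else 0).comp (P y * ·)

lemma IsClone.burleClone_subset (hC : IsClone C) (hU : unarySet X ⊆ C)
    (hadd : ClosedUnder C ((· + ·) : ZMod 2 → ZMod 2 → ZMod 2)) : BurleClone X ⊆ C := by
  rintro ⟨n, f⟩ (hf | ⟨φ₀, φ, hf⟩)
  · exact hC.mem_of_essentiallyUnary hU hf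
  · exact (hC.representable_sum hU hadd _ fun i => hC.representable_apply hU i (φ i)).mem hf

lemma IsClone.kset_two_subset [Finite X] [Nonempty X] (hC : IsClone C) (hU : unarySet X ⊆ C)
    (hmul : ClosedUnder C ((· * ·) : ZMod 2 → ZMod 2 → ZMod 2)) : Kset X 2 ⊆ C := by
  rintro ⟨n, f⟩ (hf | hf)
  · exact hC.mem_of_essentiallyUnary hU hf
  · obtain ⟨ψ, φ, hφ⟩ := exists_zmodTwo_encoding hf
    exact (hC.representable_of_mul hU hmul fun x => ψ (f x)).mem fun x => (hφ x).symm

end BooleanRepresentable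

/-! ### Essentially unary, quasilinear and other operations -/

section Operations

variable {X : Type u} {n : ℕ} {f : (Fin (n + 1) → X) → X}

lemma exists_dependsOnBoth_update (hf : ¬EssentiallyUnary ⟨n, f⟩) :
    ∃ i, DependsOnBoth fun a p => f (update p i a) := by
  have update_ne : ∃ i a a' p, f (update p i a) ≠ f (update p i a') := by
    by_contra! const
    exact hf ⟨fun a => f fun _ => a, 0, fun x => eq_of_forall_update_eq const _ _⟩
  obtain ⟨i, hi⟩ := update_ne
  refine ⟨i, hi, ?_⟩
  by_contra! unary
  refine hf ⟨fun a => f fun _ => a, i, fun x => ?_⟩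
  simpa only [update_eq_self] using unary (x i) x fun _ => x i

lemma exists_three_corners_update (hf : ¬EssentiallyUnary ⟨n, f⟩) (h : 2 < (Set.range f).ncard) :
    ∃ i a a' p q, f (update p i a) ≠ f (update p i a') ∧ f (update p i a) ≠ f (update q i a) ∧
      f (update p i a') ≠ f (update q i a) := by
  obtain ⟨i, hi⟩ := exists_dependsOnBoth_update hf
  refine ⟨i, hi.exists_three_corners fun u v => ?_⟩
  obtain ⟨x, hx⟩ := exists_ne_ne_of_two_lt_ncard_range h u v
  exact ⟨x i, x, by simpa only [update_eq_self] using hx⟩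

lemma quasilinear_iff_exists_isAdditive {f : Ops X} :
    Quasilinear f ↔ ∃ (φ : ZMod 2 → X) (P : (Fin (f.1 + 1) → X) → ZMod 2),
      IsAdditive P ∧ ∀ x, f.2 x = φ (P x) := by
  constructor
  · rintro ⟨φ₀, φ, hf⟩
    exact ⟨φ₀, _, .sum fun i _ => isAdditive_apply (α := fun _ => X) i (φ i), hf⟩
  · rintro ⟨φ, P, hP, hf⟩
    let o : Fin (f.1 + 1) → X := fun _ => φ 0
    refine ⟨fun s => φ (P o + s), fun i a => P (update o i a) - P o, fun x => ?_⟩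
    rw [hf, hP.eq_add_sum o x]

lemma exists_isOddTable_of_not_isAdditive {P : (Fin (n + 1) → X) → ZMod 2} (hP : ¬IsAdditive P) :
    ∃ i a a' p q, IsOddTable fun s t => P (update (![p, q] t) i (![a, a'] s)) := by
  contrapose! hP
  have sub_eq_sub : ∀ u v w z : ZMod 2, u + w + v + z ≠ 1 → u - v = w - z := by decide
  exact fun i a b p q => sub_eq_sub _ _ _ _ (hP i a b p q)

lemma exists_isOddTable_of_notMem_burleClone [Finite X] [Nonempty X]
    (hf : (⟨n, f⟩ : Ops X) ∉ BurleClone X) :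
    ∃ i a a' p q, ∃ ψ : X → ZMod 2,
      IsOddTable fun s t => ψ (f (update (![p, q] t) i (![a, a'] s))) := by
  obtain ⟨unary, quasilinear⟩ := not_or.mp hf
  by_cases h : (Set.range f).ncard ≤ 2
  · obtain ⟨ψ, φ, hφ⟩ := exists_zmodTwo_encoding h
    have not_additive : ¬IsAdditive fun x => ψ (f x) := fun hP =>
      quasilinear (quasilinear_iff_exists_isAdditive.mpr ⟨φ, _, hP, fun x => (hφ x).symm⟩)
    obtain ⟨i, a, a', p, q, odd⟩ := exists_isOddTable_of_not_isAdditive not_additive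
    exact ⟨i, a, a', p, q, ψ, odd⟩
  · obtain ⟨i, a, a', p, q, h₁, h₂, h₃⟩ := exists_three_corners_update unary (not_le.mp h)
    obtain ⟨ψ, odd⟩ := exists_odd_indicator h₂ h₁ h₃.symm (f (update q i a'))
    exact ⟨i, a, a', p, q, ψ, odd⟩

end Operations

/-! ### Clones containing the unary operations -/

section Interval

variable {X : Type u} {C : Set (Ops X)} {m : ℕ}

lemma IsClone.burleClone_subset_of_not_essentiallyUnary (hC : IsClone C) (hU : unarySet X ⊆ C)
    {f : Ops X} (hfC : f ∈ C) (hf : ¬EssentiallyUnary f) : BurleClone X ⊆ C := by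
  obtain ⟨i, hi⟩ := exists_dependsOnBoth_update hf
  obtain ⟨α, π, ψ, table⟩ := hi.exists_boolean_rectangle
  exact hC.burleClone_subset hU ((hC.closedUnder_table hU hfC i α π ψ).add_of_dependsOnBoth table)

lemma IsClone.kset_two_subset_of_notMem_burleClone [Finite X] [Nonempty X] (hC : IsClone C)
    (hU : unarySet X ⊆ C) {f : Ops X} (hfC : f ∈ C) (hf : f ∉ BurleClone X) : Kset X 2 ⊆ C := by
  obtain ⟨i, a, a', p, q, ψ, odd⟩ := exists_isOddTable_of_notMem_burleClone hf
  exact hC.kset_two_subset hU ((hC.closedUnder_table hU hfC i _ _ ψ).mul_of_isOddTable odd)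

lemma exists_injOn_ncard_image_apply_lt [Finite X] {n : ℕ} {f : (Fin (n + 1) → X) → X}
    (hf : ¬EssentiallyUnary ⟨n, f⟩) (hm : 2 < m) (hfm : m ≤ (Set.range f).ncard) :
    ∃ A, Set.InjOn f A ∧ A.ncard = m ∧ ∀ j, ((fun x => x j) '' A).ncard < m := by
  obtain ⟨i, a, a', p, q, h₁, h₂, h₃⟩ := exists_three_corners_update hf (hm.trans_le hfm)
  let corners : Set (Fin (n + 1) → X) := {update p i a, update p i a', update q i a}
  have corners_injOn : Set.InjOn f corners := by
    rintro x (rfl | rfl | rfl) y (rfl | rfl | rfl) h <;> first | rfl | simp_all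
  have corners_ncard : corners.ncard ≤ m := by
    have pair := Set.ncard_insert_le (update p i a') {update q i a}
    have triple := Set.ncard_insert_le (update p i a) {update p i a', update q i a}
    rw [Set.ncard_singleton] at pair
    exact triple.trans (by lia)
  obtain ⟨A, hA, hfA, rfl⟩ := exists_injOn_ncard_eq corners_injOn corners_ncard hfm
  refine ⟨A, hfA, rfl, fun j => (Set.ncard_image_le A.toFinite).lt_of_ne fun h => ?_⟩
  have apply_injOn : Set.InjOn (fun x => x j) A := (Set.ncard_image_iff A.toFinite).mp h
  have mem_p : update p i a ∈ A := hA (.inl rfl)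
  have mem_p' : update p i a' ∈ A := hA (.inr (.inl rfl))
  have mem_q : update q i a ∈ A := hA (.inr (.inr rfl))
  -- Two of the corners agree in every coordinate.
  obtain rfl | hj := eq_or_ne j i
  · exact h₂ (congrArg f (apply_injOn mem_p mem_q (by simp only [update_self])))
  · exact h₁ (congrArg f (apply_injOn mem_p mem_p' (by simp only [update_of_ne hj])))

lemma IsClone.kset_succ_subset [Finite X] [Nonempty X] (hC : IsClone C) (hU : unarySet X ⊆ C)
    (hm : 2 ≤ m) (hK : Kset X m ⊆ C) {f : Ops X} (hfC : f ∈ C) (hf : f ∉ Kset X m) :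
    Kset X (m + 1) ⊆ C := by
  obtain ⟨unary, range_gt⟩ := not_or.mp hf
  obtain ⟨A, hfA, hAm, hA⟩ :=
    exists_injOn_ncard_image_apply_lt unary (Nat.lt_succ_of_le hm) (not_le.mp range_gt)
  rintro ⟨k, g⟩ (hg | hg)
  · exact hC.mem_of_essentiallyUnary hU hg
  obtain ⟨ψ, φ, hψ, hφ⟩ := exists_mapsTo_leftInvOn_of_ncard_le (Set.finite_range g) A.toFinite
    (Set.nonempty_of_ncard_ne_zero (by rw [hAm]; exact m.succ_ne_zero)) (hAm ▸ hg)
  have coordinate (j) : (⟨k, fun x => ψ (g x) j⟩ : Ops X) ∈ C := by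
    refine hK (.inr (Nat.le_of_lt_succ ((Set.ncard_le_ncard ?_ (Set.toFinite _)).trans_lt (hA j))))
    rintro _ ⟨x, rfl⟩
    exact ⟨ψ (g x), hψ _ ⟨x, rfl⟩, rfl⟩
  exact (hC.representable_of_injOn hU hfC hfA (fun x => hψ _ ⟨x, rfl⟩) coordinate).mem
    fun x => (hφ _ ⟨x, rfl⟩).symm

lemma kset_one [Finite X] : Kset X 1 = {f | EssentiallyUnary f} := by
  refine Set.Subset.antisymm ?_ fun _ => .inl
  rintro ⟨n, f⟩ (hf | hf)
  · exact hf
  · exact ⟨fun a => f fun _ => a, 0, fun x =>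
      (Set.ncard_le_one_iff (Set.toFinite _)).mp hf ⟨x, rfl⟩ ⟨_, rfl⟩⟩

lemma kset_mono {m n : ℕ} (h : m ≤ n) : Kset X m ⊆ Kset X n :=
  fun _ hf => hf.imp_right fun hf => hf.trans h

lemma kset_card [Finite X] : Kset X (Nat.card X) = Set.univ :=
  Set.eq_univ_of_forall fun _ => .inr (Set.ncard_le_card _)

lemma IsClone.kset_one_subset [Finite X] (hC : IsClone C) (hU : unarySet X ⊆ C) :
    Kset X 1 ⊆ C := by
  rw [kset_one]
  exact fun f hf => hC.mem_of_essentiallyUnary hU hf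

lemma IsClone.eq_kset_of_kset_two_subset [Finite X] [Nontrivial X] (hC : IsClone C)
    (hU : unarySet X ⊆ C) (h : Kset X 2 ⊆ C) :
    ∃ n, 1 ≤ n ∧ n ≤ Nat.card X ∧ C = Kset X n := by
  classical
  let n := Nat.findGreatest (fun m => Kset X m ⊆ C) (Nat.card X)
  have two_le : 2 ≤ n := Nat.le_findGreatest Finite.one_lt_card h
  have subset : Kset X n ⊆ C :=
    Nat.findGreatest_spec (P := fun m => Kset X m ⊆ C) Finite.one_lt_card h
  refine ⟨n, by lia, Nat.findGreatest_le _, (subset.antisymm fun f hfC => ?_).symm⟩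
  by_contra hf
  have n_lt : n < Nat.card X := by
    by_contra! card_le
    exact hf (kset_mono card_le (kset_card.ge (Set.mem_univ f)))
  exact Nat.findGreatest_is_greatest n.lt_succ_self n_lt
    (hC.kset_succ_subset hU two_le subset hfC hf)

lemma IsClone.eq_burleClone_or_eq_kset [Finite X] [Nontrivial X] (hC : IsClone C)
    (hU : unarySet X ⊆ C) :
    C = BurleClone X ∨ ∃ n, 1 ≤ n ∧ n ≤ Nat.card X ∧ C = Kset X n := by
  by_cases unary : C ⊆ Kset X 1
  · exact .inr ⟨1, le_rfl, Nat.card_pos, unary.antisymm (hC.kset_one_subset hU)⟩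
  obtain ⟨f, hfC, hf⟩ := Set.not_subset.mp unary
  have burle_subset := hC.burleClone_subset_of_not_essentiallyUnary hU hfC fun h => hf (.inl h)
  by_cases burle : C ⊆ BurleClone X
  · exact .inl (burle.antisymm burle_subset)
  obtain ⟨g, hgC, hg⟩ := Set.not_subset.mp burle
  exact .inr (hC.eq_kset_of_kset_two_subset hU
    (hC.kset_two_subset_of_notMem_burleClone hU hgC hg))

end Interval

/-! ### The chain -/

section Chain

variable {X : Type u} {n : ℕ}

lemma isClone_essentiallyUnary_or_mem {M : Set (Ops X)}
    (postcomp : ∀ n (F : X → X) f, (⟨n, f⟩ : Ops X) ∈ M → (⟨n, fun x => F (f x)⟩ : Ops X) ∈ M)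
    (subst : ∀ n m f (g : Fin (n + 1) → (Fin (m + 1) → X) → X), (⟨n, f⟩ : Ops X) ∈ M →
      (∀ i, EssentiallyUnary ⟨m, g i⟩ ∨ (⟨m, g i⟩ : Ops X) ∈ M) →
      (⟨m, fun x => f fun i => g i x⟩ : Ops X) ∈ M) :
    IsClone {f : Ops X | EssentiallyUnary f ∨ f ∈ M} := by
  refine ⟨fun n k => .inl ⟨id, k, fun _ => rfl⟩, ?_⟩
  rintro n m f (⟨F, k, hF⟩ | hf) g hg
  · have comp_eq : (fun x => f fun i => g i x) = fun x => F (g k x) := funext fun x => hF _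
    rw [comp_eq]
    obtain ⟨G, l, hG⟩ | hgk := hg k
    · exact .inl ⟨F ∘ G, l, fun x => congrArg F (hG x)⟩
    · exact .inr (postcomp m F (g k) hgk)
  · exact .inr (subst n m f g hf hg)

lemma isClone_kset [Finite X] (n : ℕ) : IsClone (Kset X n) := by
  refine isClone_essentiallyUnary_or_mem (M := {f | (Set.range f.2).ncard ≤ n}) ?_ ?_
  · intro k F f hf
    rw [Set.mem_ofPred_eq, Set.range_comp' F f]
    exact (Set.ncard_image_le (Set.toFinite _)).trans hf
  · intro k m f g hf _
    exact (Set.ncard_le_ncard (Set.range_comp_subset_range _ f) (Set.toFinite _)).trans hf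

lemma isClone_burleClone : IsClone (BurleClone X) := by
  refine isClone_essentiallyUnary_or_mem (M := {f | Quasilinear f}) ?_ ?_
  · rintro n F f ⟨φ₀, φ, hf⟩
    exact ⟨F ∘ φ₀, φ, fun x => congrArg F (hf x)⟩
  · rintro n m f g ⟨φ₀, φ, hf⟩ hg
    refine quasilinear_iff_exists_isAdditive.mpr
      ⟨φ₀, fun x => ∑ i, φ i (g i x), .sum fun i _ => ?_, fun x => hf _⟩
    obtain ⟨F, k, hF⟩ | quasilinear := hg i
    · change ∀ x, g i x = F (x k) at hF
      simpa only [hF] using isAdditive_apply (α := fun _ => X) k fun a => φ i (F a)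
    · obtain ⟨χ, P, hP, hχ⟩ := quasilinear_iff_exists_isAdditive.mp quasilinear
      change ∀ x, g i x = χ (P x) at hχ
      simpa only [hχ] using hP.comp_zmodTwo fun s => φ i (χ s)

lemma cloneGen_unarySet [Finite X] : cloneGen (unarySet X) = Kset X 1 := by
  refine Set.Subset.antisymm (Set.sInter_subset_of_mem ⟨isClone_kset 1, ?_⟩)
    (Set.subset_sInter fun C hC => hC.1.kset_one_subset hC.2)
  rintro _ ⟨F, rfl⟩
  exact .inl ⟨F, 0, fun _ => rfl⟩

lemma burleClone_subset_kset_two : BurleClone X ⊆ Kset X 2 := by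
  rintro f (hf | ⟨φ₀, φ, hf⟩)
  · exact .inl hf
  · refine .inr ?_
    rw [funext hf]
    exact (ncard_range_comp_le φ₀ _).trans_eq (Nat.card_zmod 2)

lemma exists_quasilinear_not_essentiallyUnary [Nontrivial X] :
    ∃ f : Ops X, Quasilinear f ∧ ¬EssentiallyUnary f := by
  classical
  obtain ⟨u, v, huv⟩ := exists_pair_ne X
  let φ (a : X) : ZMod 2 := if a = u then 1 else 0
  let φ₀ : ZMod 2 → X := ![v, u]
  have φ_φ₀ : ∀ s, φ (φ₀ s) = s := Fin.forall_fin_two.mpr ⟨if_neg huv.symm, if_pos rfl⟩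
  refine ⟨⟨1, fun x => φ₀ (∑ i, φ (x i))⟩, ⟨φ₀, fun _ => φ, fun _ => rfl⟩, ?_⟩
  rintro ⟨F, k, hF⟩
  have φ_F (x : Fin 2 → X) : φ (x 0) + φ (x 1) = φ (F (x k)) := by
    rw [← hF, φ_φ₀, Fin.sum_univ_two]
  have φ_u : φ u = 1 := if_pos rfl
  have φ_v : φ v = 0 := if_neg huv.symm
  have at_uu := φ_F ![u, u]
  have at_uv := φ_F ![u, v]
  have at_vu := φ_F ![v, u]
  fin_cases k <;> simp_all

lemma apply_update_eq_of_mem_burleClone {f : Ops X} (hf : f ∈ BurleClone X) {i a a' p q}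
    (h : f.2 (update p i a') = f.2 (update p i a)) (h' : f.2 (update q i a) = f.2 (update p i a)) :
    f.2 (update q i a') = f.2 (update p i a) := by
  obtain ⟨F, k, hF⟩ | quasilinear := hf
  · simp only [hF] at h h' ⊢
    obtain rfl | hk := eq_or_ne k i
    · simpa only [update_self] using h
    · simpa only [update_of_ne hk] using h'
  · obtain ⟨φ, P, hP, hφ⟩ := quasilinear_iff_exists_isAdditive.mp quasilinear
    simp only [hφ] at h h' ⊢
    have parity : ∀ s t u v : ZMod 2, s - t = u - v → v = s ∨ v = t ∨ v = u := by decide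
    obtain hv | hv | hv := parity _ _ _ _ (hP i a a' p q)
    · rw [hv]
    · rw [hv, h]
    · rw [hv, h']

lemma exists_notMem_burleClone_ncard_range_eq [Finite X] (hn : 2 ≤ n) (hnX : n ≤ Nat.card X) :
    ∃ f : Ops X, f ∉ BurleClone X ∧ (Set.range f.2).ncard = n := by
  classical
  obtain ⟨⟨a⟩, -⟩ := Nat.card_pos_iff.mp (Nat.zero_lt_of_lt (hn.trans hnX))
  obtain ⟨t, hat, -, rfl⟩ := Set.exists_subsuperset_card_eq (n := n) (Set.subset_univ {a})
    (by rw [Set.ncard_singleton]; lia) (by rwa [Set.ncard_univ])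
  rw [Set.singleton_subset_iff] at hat
  obtain ⟨c, hc, hca⟩ := Set.exists_ne_of_one_lt_ncard hn a
  let f (x : Fin 2 → X) : X := if x 1 ≠ a ∧ x 0 ∈ t then x 0 else a
  refine ⟨⟨1, f⟩, fun hf => ?_, congrArg Set.ncard (Set.Subset.antisymm ?_ fun b hb => ?_)⟩
  · have c_eq_a := apply_update_eq_of_mem_burleClone hf (i := (1 : Fin 2)) (a := a) (a' := c)
      (p := fun _ => a) (q := fun _ => c) (by simp [f]) (by simp [f])
    simp [f, hca, hc] at c_eq_a
  · rintro _ ⟨x, rfl⟩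
    dsimp only [f]
    split_ifs with hx
    exacts [hx.2, hat]
  · exact ⟨![b, c], if_pos ⟨hca, hb⟩⟩

lemma kset_one_ssubset_burleClone [Finite X] [Nontrivial X] : Kset X 1 ⊂ BurleClone X := by
  rw [kset_one, Set.ssubset_iff_of_subset fun _ => .inl]
  obtain ⟨f, hf, unary⟩ := exists_quasilinear_not_essentiallyUnary (X := X)
  exact ⟨f, .inr hf, unary⟩

lemma burleClone_ssubset_kset_two [Finite X] [Nontrivial X] : BurleClone X ⊂ Kset X 2 := by
  rw [Set.ssubset_iff_of_subset burleClone_subset_kset_two]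
  obtain ⟨f, hf, range_eq⟩ :=
    exists_notMem_burleClone_ncard_range_eq (X := X) le_rfl Finite.one_lt_card
  exact ⟨f, .inr range_eq.le, hf⟩

lemma kset_ssubset_kset_succ [Finite X] (hn : 1 ≤ n) (hnX : n + 1 ≤ Nat.card X) :
    Kset X n ⊂ Kset X (n + 1) := by
  rw [Set.ssubset_iff_of_subset (kset_mono n.le_succ)]
  obtain ⟨f, hf, range_eq⟩ :=
    exists_notMem_burleClone_ncard_range_eq (Nat.succ_le_succ hn) hnX
  refine ⟨f, .inr range_eq.le, not_or.mpr ⟨fun unary => hf (.inl unary), ?_⟩⟩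
  rw [range_eq]
  exact n.not_succ_le_self

end Chain

/-- **Burle's theorem**: on a finite base set `X` with at least two elements, the interval
`[⟨O⁽¹⁾⟩, O]` of the clone lattice is the chain
`⟨O⁽¹⁾⟩ = K₁ ⊊ B ⊊ K₂ ⊊ ⋯ ⊊ K_{|X|} = O`. -/
theorem stmt3 {X : Type u} [Fintype X] (h2 : 2 ≤ Fintype.card X) :
    (∀ n, 1 ≤ n → n ≤ Fintype.card X → IsClone (Kset X n)) ∧
    IsClone (BurleClone X) ∧
    cloneGen (unarySet X) = Kset X 1 ∧
    Kset X 1 ⊂ BurleClone X ∧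
    BurleClone X ⊂ Kset X 2 ∧
    (∀ n, 2 ≤ n → n + 1 ≤ Fintype.card X → Kset X n ⊂ Kset X (n + 1)) ∧
    Kset X (Fintype.card X) = Set.univ ∧
    (∀ C : Set (Ops X), IsClone C → unarySet X ⊆ C →
      C = BurleClone X ∨ ∃ n, 1 ≤ n ∧ n ≤ Fintype.card X ∧ C = Kset X n) := by
  have : Nontrivial X := Fintype.one_lt_card_iff_nontrivial.mp h2
  rw [← Nat.card_eq_fintype_card]
  exact ⟨fun n _ _ => isClone_kset n, isClone_burleClone, cloneGen_unarySet,
    kset_one_ssubset_burleClone, burleClone_ssubset_kset_two,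
    fun n hn => kset_ssubset_kset_succ (Nat.one_le_of_lt hn), kset_card,
    fun C hC hU => hC.eq_burleClone_or_eq_kset hU⟩
end

section
/- Let the base set be ℕ. A binary operation f : ℕ² → ℕ is densely unary if and only if it is never 1-1. -/
universe u v

open Cardinal

/-- A binary operation is essentially unary iff it depends on at most one variable. -/
def EssUnary2 (u : ℕ → ℕ → ℕ) : Prop :=
  (∃ U : ℕ → ℕ, ∀ x y, u x y = U x) ∨ (∃ U : ℕ → ℕ, ∀ x y, u x y = U y)

/-- The set `∇` of points above the diagonal. -/
def Nabla : Set (ℕ × ℕ) := {p | p.1 < p.2}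

/-- A binary operation `f` is never 1-1 iff for all essentially unary `u, v`, the
operation `f(u,v)` restricted to `∇` is not injective. -/
def NeverOneOne (f : ℕ → ℕ → ℕ) : Prop :=
  ∀ u v : ℕ → ℕ → ℕ, EssUnary2 u → EssUnary2 v →
    ¬ Set.InjOn (fun p : ℕ × ℕ => f (u p.1 p.2) (v p.1 p.2)) Nabla

/-- A binary operation `f` is densely unary iff inside every pair of infinite sets one
finds infinite sets on whose product `f` is essentially unary below and above the
diagonal. -/
def DenselyUnary (f : ℕ → ℕ → ℕ) : Prop :=
  ∀ A B : Set ℕ, A.Infinite → B.Infinite →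
    ∃ A' B' : Set ℕ, A' ⊆ A ∧ B' ⊆ B ∧ A'.Infinite ∧ B'.Infinite ∧
      ((∃ U : ℕ → ℕ, ∀ x ∈ A', ∀ y ∈ B', y < x → f x y = U x) ∨
       (∃ U : ℕ → ℕ, ∀ x ∈ A', ∀ y ∈ B', y < x → f x y = U y)) ∧
      ((∃ U : ℕ → ℕ, ∀ x ∈ A', ∀ y ∈ B', x < y → f x y = U x) ∨
       (∃ U : ℕ → ℕ, ∀ x ∈ A', ∀ y ∈ B', x < y → f x y = U y))

/-!
Nonprincipal ultrafilters `𝒰` and `𝒱` replace Ramsey's theorem. Along `𝒱`, a row `f a` is either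
constant or leaves every finite set, and along `𝒰` and `𝒱` any two rows either agree or differ. If
almost all rows are constant, or almost all rows agree with a single one, then `f` is essentially
unary along `𝒰` and `𝒱`. Otherwise a diagonal construction chooses rows and columns on which `f` is
1-1 above the diagonal. So when `f` is never 1-1, it is essentially unary along `𝒰, 𝒱` and along
`𝒱, 𝒰`, and interleaving two sequences realizes both behaviours on infinite sets.

Conversely, if `(m, n) ↦ f (U m, V n)` is 1-1 on `∇`, then infinite subsets of the ranges of `U` and
`V` still contain two columns above one row and two rows below one column, so `f` cannot be
essentially unary there.
-/

open Filter Set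

section DiagonalSequences

theorem exists_seq_of_eventually {α : Type*} {F : Filter α} [F.NeBot] {p : α → Prop}
    {r : α → α → Prop} (hp : ∀ᶠ y in F, p y) (hr : ∀ x, p x → ∀ᶠ y in F, r x y) :
    ∃ φ : ℕ → α, (∀ n, p (φ n)) ∧ ∀ m n, m < n → r (φ m) (φ n) :=
  exists_seq_of_forall_finset_exists p r fun s hs =>
    (hp.and ((eventually_all_finset s).2 fun x hx => hr x (hs x hx))).exists

theorem exists_seq_prod_of_eventually {α β : Type*} {F : Filter α} {G : Filter β} [F.NeBot]
    [G.NeBot] {p : α → β → Prop} {r : α × β → α → β → Prop} (hp : ∀ᶠ a in F, ∀ᶠ b in G, p a b)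
    (hr : ∀ x : α × β, p x.1 x.2 → ∀ᶠ a in F, ∀ᶠ b in G, r x a b) :
    ∃ (u : ℕ → α) (v : ℕ → β), (∀ n, p (u n) (v n)) ∧
      ∀ m n, m < n → r (u m, v m) (u n) (v n) := by
  have : (F.curry G).NeBot :=
    (frequently_true_iff_neBot _).1 ((frequently_curry_iff _).2 (by simp only [frequently_const]))
  obtain ⟨φ, hφp, hφr⟩ := exists_seq_of_eventually (F := F.curry G)
    (p := fun x => p x.1 x.2) (r := fun x y => r x y.1 y.2)
    (eventually_curry_iff.2 hp) fun x hx => eventually_curry_iff.2 (hr x hx)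
  exact ⟨fun n => (φ n).1, fun n => (φ n).2, hφp, hφr⟩

section Interleaving

variable {F G : Filter ℕ} [F.NeBot] [G.NeBot] {A B : Set ℕ} {R S : ℕ → ℕ → Prop}

theorem exists_interleaved_seq_of_eventually (hF : F ≤ atTop) (hG : G ≤ atTop) (hA : A ∈ F)
    (hB : B ∈ G) (hR : ∀ᶠ x in F, ∀ᶠ y in G, R x y) (hS : ∀ᶠ y in G, ∀ᶠ x in F, S y x) :
    ∃ u v : ℕ → ℕ, (∀ n, u n ∈ A ∧ v n ∈ B) ∧ (∀ m n, m ≤ n → u m < v n ∧ R (u m) (v n)) ∧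
      ∀ m n, m < n → v m < u n ∧ S (v m) (u n) := by
  have F_gt (n : ℕ) : ∀ᶠ x in F, n < x := hF (eventually_gt_atTop n)
  have G_gt (n : ℕ) : ∀ᶠ y in G, n < y := hG (eventually_gt_atTop n)
  obtain ⟨u, v, hp, hr⟩ := exists_seq_prod_of_eventually (F := F) (G := G)
    (p := fun x y => (x ∈ A ∧ y ∈ B) ∧ (x < y ∧ R x y) ∧ (∀ᶠ y' in G, R x y') ∧ ∀ᶠ x' in F, S y x')
    (r := fun p x y => (p.1 < y ∧ R p.1 y) ∧ p.2 < x ∧ S p.2 x)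
    (by
      filter_upwards [hA, hR] with x hxA hxR
      filter_upwards [hB, hS, G_gt x, hxR] with y hyB hyS hxy hRxy
      exact ⟨⟨hxA, hyB⟩, ⟨hxy, hRxy⟩, hxR, hyS⟩)
    (by
      rintro ⟨x, y⟩ ⟨-, -, hxR, hyS⟩
      filter_upwards [F_gt y, hyS] with x' hyx' hSyx'
      filter_upwards [G_gt x, hxR] with y' hxy' hRxy'
      exact ⟨⟨hxy', hRxy'⟩, hyx', hSyx'⟩)
  refine ⟨u, v, fun n => (hp n).1, fun m n hmn => ?_, fun m n hmn => (hr m n hmn).2⟩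
  rcases hmn.eq_or_lt with rfl | hmn
  · exact (hp m).2.1
  · exact (hr m n hmn).1

theorem exists_infinite_subsets_of_eventually (hF : F ≤ atTop) (hG : G ≤ atTop) (hA : A ∈ F)
    (hB : B ∈ G) (hR : ∀ᶠ x in F, ∀ᶠ y in G, R x y) (hS : ∀ᶠ y in G, ∀ᶠ x in F, S y x) :
    ∃ A' ⊆ A, ∃ B' ⊆ B, A'.Infinite ∧ B'.Infinite ∧
      (∀ x ∈ A', ∀ y ∈ B', x < y → R x y) ∧ ∀ y ∈ B', ∀ x ∈ A', y < x → S y x := by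
  obtain ⟨u, v, hmem, huv, hvu⟩ := exists_interleaved_seq_of_eventually hF hG hA hB hR hS
  have hu : StrictMono u := fun m n h => (huv m m le_rfl).1.trans (hvu m n h).1
  have hv : StrictMono v := fun m n h => (hvu m n h).1.trans (huv n n le_rfl).1
  refine ⟨range u, range_subset_iff.2 fun n => (hmem n).1,
    range v, range_subset_iff.2 fun n => (hmem n).2,
    infinite_range_of_injective hu.injective, infinite_range_of_injective hv.injective, ?_, ?_⟩
  · rintro _ ⟨m, rfl⟩ _ ⟨n, rfl⟩ hlt
    exact (huv m n (le_of_not_gt fun hnm => (hvu n m hnm).1.not_gt hlt)).2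
  · rintro _ ⟨n, rfl⟩ _ ⟨m, rfl⟩ hlt
    exact (hvu n m (lt_of_not_ge fun hmn => (huv m n hmn).1.not_gt hlt)).2

end Interleaving

theorem exists_ultrafilter_mem_le_atTop {A : Set ℕ} (hA : A.Infinite) :
    ∃ 𝒰 : Ultrafilter ℕ, A ∈ 𝒰 ∧ (𝒰 : Filter ℕ) ≤ atTop := by
  have : (atTop ⊓ 𝓟 A).NeBot := frequently_mem_iff_neBot.1 (Nat.frequently_atTop_iff_infinite.2 hA)
  obtain ⟨𝒰, h𝒰⟩ := Ultrafilter.exists_le (atTop ⊓ 𝓟 A)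
  exact ⟨𝒰, le_principal_iff.1 (h𝒰.trans inf_le_right), h𝒰.trans inf_le_left⟩

end DiagonalSequences

section Dichotomy

variable {α β γ : Type*}

/-- `f` is 1-1 on a copy of the triangle `∇`: some rows `u m` and columns `v n` make
`(m, n) ↦ f (u m) (v n)` injective on `∇`. The operations `f` that are never 1-1 are those for which
neither `f` nor `flip f` embeds the triangle. -/
def EmbedsNabla (f : α → β → γ) : Prop :=
  ∃ (u : ℕ → α) (v : ℕ → β), InjOn (fun p : ℕ × ℕ => f (u p.1) (v p.2)) Nabla

theorem eventually_injOn_of_pairwise {ι : Type*} {G : Filter β} {g : ι → β → γ}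
    (hg : Pairwise fun k l => ∀ᶠ b in G, g k b ≠ g l b) {s : Set ι} (hs : s.Finite) :
    ∀ᶠ b in G, InjOn (fun k => g k b) s := by
  have hne : ∀ᶠ b in G, ∀ k ∈ s, ∀ l ∈ s, k ≠ l → g k b ≠ g l b :=
    (eventually_all_finite hs).2 fun k _ => (eventually_all_finite hs).2 fun l _ =>
      eventually_imp_distrib_left.2 fun hkl => hg hkl
  filter_upwards [hne] with b hb
  exact injOn_iff_pairwise_ne.2 fun k hk l hl => hb k hk l hl

theorem embedsNabla_of_seq {G : Filter β} [G.NeBot] {g : ℕ → β → γ}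
    (hg : ∀ m, Tendsto (g m) G cofinite)
    (hne : Pairwise fun m n => ∀ᶠ b in G, g m b ≠ g n b) : EmbedsNabla g := by
  have column_avoids (n : ℕ) {s : Set γ} (hs : s.Finite) : ∀ᶠ b in G, ∀ k ∈ Iio n, g k b ∉ s :=
    (eventually_all_finite (finite_Iio n)).2 fun k _ => hg k hs.compl_mem_cofinite
  obtain ⟨N, v, hinj, hr⟩ := exists_seq_prod_of_eventually (F := atTop) (G := G)
    (p := fun n b => InjOn (fun k => g k b) (Iio n))
    (r := fun x n b => x.1 < n ∧ ∀ k ∈ Iio n, g k b ∉ (fun j => g j x.2) '' Iio x.1)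
    (Eventually.of_forall fun n => eventually_injOn_of_pairwise hne (finite_Iio n))
    (fun x _ => by
      filter_upwards [eventually_gt_atTop x.1] with n hn
      filter_upwards [column_avoids n ((finite_Iio x.1).image fun j => g j x.2)] with b hb
      exact ⟨hn, hb⟩)
  have hN : StrictMono N := fun m n h => (hr m n h).1
  have le_N (n : ℕ) : n ≤ N n := hN.le_apply
  have columns_ne {k l m n : ℕ} (hkm : k < m) (hln : l < n) (hmn : m < n) :
      g l (v n) ≠ g k (v m) := fun h =>
    (hr m n hmn).2 l (hln.trans_le (le_N n)) ⟨k, hkm.trans_le (le_N m), h.symm⟩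
  refine ⟨id, v, ?_⟩
  rintro ⟨k, m⟩ hkm ⟨l, n⟩ hln (h : g k (v m) = g l (v n))
  rcases lt_trichotomy m n with hmn | rfl | hnm
  · exact absurd h.symm (columns_ne hkm hln hmn)
  · have hkl : k = l := hinj m (hkm.trans_le (le_N m)) (hln.trans_le (le_N m)) h
    rw [hkl]
  · exact absurd h (columns_ne hln hkm hnm)

theorem embedsNabla_of_eventually {F : Filter α} {G : Filter β} [F.NeBot] [G.NeBot]
    {f : α → β → γ} (hf : ∀ᶠ a in F, Tendsto (f a) G cofinite)
    (hne : ∀ a, ∀ᶠ a' in F, ∀ᶠ b in G, f a b ≠ f a' b) : EmbedsNabla f := by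
  obtain ⟨u, hu, hu_ne⟩ := exists_seq_of_eventually hf fun a _ => hne a
  have : Std.Symm fun m n => ∀ᶠ b in G, f (u m) b ≠ f (u n) b :=
    ⟨fun _ _ h => h.mono fun _ => Ne.symm⟩
  obtain ⟨w, v, hinj⟩ := embedsNabla_of_seq (g := fun m => f (u m)) hu (.of_lt hu_ne)
  exact ⟨u ∘ w, v, hinj⟩

theorem tendsto_cofinite_or_eventually_eq (𝒱 : Ultrafilter β) (g : β → γ) :
    Tendsto g 𝒱 cofinite ∨ ∃ c, ∀ᶠ b in (𝒱 : Filter β), g b = c := by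
  refine or_iff_not_imp_right.2 fun h => le_cofinite_iff_eventually_ne.2 fun c => ?_
  exact Ultrafilter.eventually_not.2 fun hc => h ⟨c, hc⟩

theorem eventually_unary_of_not_embedsNabla (𝒰 : Ultrafilter α) (𝒱 : Ultrafilter β)
    {f : α → β → γ} (hf : ¬ EmbedsNabla f) :
    (∃ U : α → γ, ∀ᶠ a in (𝒰 : Filter α), ∀ᶠ b in (𝒱 : Filter β), f a b = U a) ∨
      ∃ V : β → γ, ∀ᶠ a in (𝒰 : Filter α), ∀ᶠ b in (𝒱 : Filter β), f a b = V b := by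
  by_cases hrows : ∀ᶠ a in (𝒰 : Filter α), Tendsto (f a) 𝒱 cofinite
  · right
    obtain ⟨a₀, ha₀⟩ :
        ∃ a₀, ¬ ∀ᶠ a in (𝒰 : Filter α), ∀ᶠ b in (𝒱 : Filter β), f a₀ b ≠ f a b := by
      by_contra! hne
      exact hf (embedsNabla_of_eventually hrows hne)
    refine ⟨f a₀, ?_⟩
    filter_upwards [Ultrafilter.eventually_not.2 ha₀] with a ha
    filter_upwards [Ultrafilter.eventually_not.2 ha] with b hb
    exact (not_not.1 hb).symm
  · left
    have hconst : ∀ᶠ a in (𝒰 : Filter α), ∃ c, ∀ᶠ b in (𝒱 : Filter β), f a b = c := by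
      filter_upwards [Ultrafilter.eventually_not.2 hrows] with a ha
      exact (tendsto_cofinite_or_eventually_eq 𝒱 (f a)).resolve_left ha
    exact hconst.choice

end Dichotomy

section Operations

theorem exists_essUnary2_and_iff {P : (ℕ → ℕ → ℕ) → Prop} :
    (∃ u, EssUnary2 u ∧ P u) ↔ (∃ U : ℕ → ℕ, P fun x _ => U x) ∨ ∃ U : ℕ → ℕ, P fun _ y => U y := by
  constructor
  · rintro ⟨u, ⟨U, hU⟩ | ⟨U, hU⟩, hP⟩
    · obtain rfl : u = fun x _ => U x := funext₂ hU
      exact Or.inl ⟨U, hP⟩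
    · obtain rfl : u = fun _ y => U y := funext₂ hU
      exact Or.inr ⟨U, hP⟩
  · rintro (⟨U, hP⟩ | ⟨U, hP⟩)
    · exact ⟨_, Or.inl ⟨U, fun _ _ => rfl⟩, hP⟩
    · exact ⟨_, Or.inr ⟨U, fun _ _ => rfl⟩, hP⟩

/-- `f` is essentially unary on the part of `A × B` above the diagonal. For the part of `A × B`
below the diagonal, apply this to `flip f` and `B × A`. -/
def EssUnaryAbove (f : ℕ → ℕ → ℕ) (A B : Set ℕ) : Prop :=
  ∃ u, EssUnary2 u ∧ ∀ x ∈ A, ∀ y ∈ B, x < y → f x y = u x y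

theorem essUnaryAbove_iff {f : ℕ → ℕ → ℕ} {A B : Set ℕ} : EssUnaryAbove f A B ↔
    (∃ U : ℕ → ℕ, ∀ x ∈ A, ∀ y ∈ B, x < y → f x y = U x) ∨
      ∃ U : ℕ → ℕ, ∀ x ∈ A, ∀ y ∈ B, x < y → f x y = U y :=
  exists_essUnary2_and_iff

theorem essUnaryAbove_flip_iff {f : ℕ → ℕ → ℕ} {A B : Set ℕ} : EssUnaryAbove (flip f) B A ↔
    (∃ U : ℕ → ℕ, ∀ x ∈ A, ∀ y ∈ B, y < x → f x y = U x) ∨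
      ∃ U : ℕ → ℕ, ∀ x ∈ A, ∀ y ∈ B, y < x → f x y = U y := by
  rw [essUnaryAbove_iff, or_comm]
  exact or_congr
    (exists_congr fun U => ⟨fun h x hx y hy => h y hy x hx, fun h y hy x hx => h x hx y hy⟩)
    (exists_congr fun U => ⟨fun h x hx y hy => h y hy x hx, fun h y hy x hx => h x hx y hy⟩)

theorem denselyUnary_iff {f : ℕ → ℕ → ℕ} :
    DenselyUnary f ↔ ∀ A B : Set ℕ, A.Infinite → B.Infinite → ∃ A' ⊆ A, ∃ B' ⊆ B,
      A'.Infinite ∧ B'.Infinite ∧ EssUnaryAbove (flip f) B' A' ∧ EssUnaryAbove f A' B' := by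
  simp only [DenselyUnary, essUnaryAbove_iff (f := f), essUnaryAbove_flip_iff, exists_and_left]

theorem neverOneOne_iff {f : ℕ → ℕ → ℕ} :
    NeverOneOne f ↔ ¬ EmbedsNabla f ∧ ¬ EmbedsNabla (flip f) := by
  constructor
  · refine fun hf => ⟨fun ⟨U, V, h⟩ => ?_, fun ⟨U, V, h⟩ => ?_⟩
    · exact hf (fun x _ => U x) (fun _ y => V y) (.inl ⟨U, fun _ _ => rfl⟩)
        (.inr ⟨V, fun _ _ => rfl⟩) h
    · exact hf (fun _ y => V y) (fun x _ => U x) (.inr ⟨V, fun _ _ => rfl⟩)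
        (.inl ⟨U, fun _ _ => rfl⟩) h
  · rintro ⟨hf, hflip⟩ u v (⟨U, hU⟩ | ⟨U, hU⟩) (⟨V, hV⟩ | ⟨V, hV⟩) hinj <;>
      simp only [hU, hV] at hinj
    · simpa using @hinj (0, 1) Nat.zero_lt_one (0, 2) Nat.zero_lt_two rfl
    · exact hf ⟨U, V, hinj⟩
    · exact hflip ⟨V, U, hinj⟩
    · simpa using @hinj (0, 2) Nat.zero_lt_two (1, 2) Nat.one_lt_two rfl

section InjectiveOnNabla

variable {α β γ : Type*} {f : α → β → γ} {U : ℕ → α} {V : ℕ → β}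

theorem injective_row_of_injOn_nabla
    (h : InjOn (fun p : ℕ × ℕ => f (U p.1) (V p.2)) Nabla) : Function.Injective U := by
  intro m m' hU
  have heq : (m, m + m' + 1) = (m', m + m' + 1) :=
    h (show m < _ by omega) (show m' < _ by omega) (congrArg (f · (V (m + m' + 1))) hU)
  exact congrArg Prod.fst heq

-- The column `V 0` does not occur in `∇`, hence the shift.
theorem injective_column_of_injOn_nabla
    (h : InjOn (fun p : ℕ × ℕ => f (U p.1) (V p.2)) Nabla) :
    Function.Injective fun n => V (n + 1) := by
  intro n n' hV
  have heq : (0, n + 1) = (0, n' + 1) := h n.succ_pos n'.succ_pos (congrArg (f (U 0)) hV)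
  exact Nat.succ_injective (congrArg Prod.snd heq)

end InjectiveOnNabla

theorem not_essUnaryAbove_of_injOn_nabla {f : ℕ → ℕ → ℕ} {U V : ℕ → ℕ}
    (hinj : InjOn (fun p : ℕ × ℕ => f (U p.1) (V p.2)) Nabla) {A B : Set ℕ}
    (hA : A.Infinite) (hAU : A ⊆ range U) (hB : B.Infinite) (hBV : B ⊆ range V) :
    ¬ EssUnaryAbove f A B := by
  have hV : Tendsto V atTop atTop :=
    (tendsto_add_atTop_iff_nat 1).1 (injective_column_of_injOn_nabla hinj).nat_tendsto_atTop
  obtain ⟨m, hm⟩ := (hA.preimage hAU).nonempty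
  obtain ⟨m', hm', hmm'⟩ := (hA.preimage hAU).exists_gt m
  have columns (N : ℕ) : ∃ n > N, m' < n ∧ V n ∈ B ∧ U m < V n ∧ U m' < V n := by
    obtain ⟨n, hn, ⟨hN, hm'n⟩, hUV⟩ :=
      ((Nat.frequently_atTop_iff_infinite.2 (hB.preimage hBV)).and_eventually
        (((eventually_gt_atTop N).and (eventually_gt_atTop m')).and
          ((hV.eventually_gt_atTop (U m)).and (hV.eventually_gt_atTop (U m'))))).exists
    exact ⟨n, hN, hm'n, hn, hUV⟩
  obtain ⟨n, -, hm'n, hn, hlt, hlt'⟩ := columns 0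
  obtain ⟨n', hnn', hm'n', hn', hltn', -⟩ := columns n
  rw [essUnaryAbove_iff]
  rintro (⟨W, hW⟩ | ⟨W, hW⟩)
  · have heq : (m, n) = (m, n') := hinj (hmm'.trans hm'n) (hmm'.trans hm'n')
      ((hW _ hm _ hn hlt).trans (hW _ hm _ hn' hltn').symm)
    exact hnn'.ne (congrArg Prod.snd heq)
  · have heq : (m, n) = (m', n) := hinj (hmm'.trans hm'n) hm'n
      ((hW _ hm _ hn hlt).trans (hW _ hm' _ hn hlt').symm)
    exact hmm'.ne (congrArg Prod.fst heq)

theorem EmbedsNabla.exists_infinite_forall_not_essUnaryAbove {f : ℕ → ℕ → ℕ}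
    (hf : EmbedsNabla f) : ∃ A B : Set ℕ, A.Infinite ∧ B.Infinite ∧
      ∀ A' ⊆ A, ∀ B' ⊆ B, A'.Infinite → B'.Infinite → ¬ EssUnaryAbove f A' B' := by
  obtain ⟨U, V, hinj⟩ := hf
  refine ⟨range U, range V, infinite_range_of_injective (injective_row_of_injOn_nabla hinj),
    (infinite_range_of_injective (injective_column_of_injOn_nabla hinj)).mono
      (range_comp_subset_range (· + 1) V), fun A' hA' B' hB' hA hB => ?_⟩
  exact not_essUnaryAbove_of_injOn_nabla hinj hA hA' hB hB'

theorem exists_infinite_essUnaryAbove {f : ℕ → ℕ → ℕ} (hf : ¬ EmbedsNabla f)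
    (hflip : ¬ EmbedsNabla (flip f)) {A B : Set ℕ} (hA : A.Infinite) (hB : B.Infinite) :
    ∃ A' ⊆ A, ∃ B' ⊆ B, A'.Infinite ∧ B'.Infinite ∧
      EssUnaryAbove (flip f) B' A' ∧ EssUnaryAbove f A' B' := by
  obtain ⟨𝒰, hA𝒰, h𝒰⟩ := exists_ultrafilter_mem_le_atTop hA
  obtain ⟨𝒱, hB𝒱, h𝒱⟩ := exists_ultrafilter_mem_le_atTop hB
  obtain ⟨u, hu, hfu⟩ : ∃ u, EssUnary2 u ∧
      ∀ᶠ x in (𝒰 : Filter ℕ), ∀ᶠ y in (𝒱 : Filter ℕ), f x y = u x y :=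
    exists_essUnary2_and_iff.2 (eventually_unary_of_not_embedsNabla 𝒰 𝒱 hf)
  obtain ⟨w, hw, hfw⟩ : ∃ w, EssUnary2 w ∧
      ∀ᶠ y in (𝒱 : Filter ℕ), ∀ᶠ x in (𝒰 : Filter ℕ), flip f y x = w y x :=
    exists_essUnary2_and_iff.2 (eventually_unary_of_not_embedsNabla 𝒱 𝒰 hflip)
  obtain ⟨A', hA', B', hB', hA'inf, hB'inf, habove, hbelow⟩ :=
    exists_infinite_subsets_of_eventually h𝒰 h𝒱 hA𝒰 hB𝒱 hfu hfw
  exact ⟨A', hA', B', hB', hA'inf, hB'inf, ⟨w, hw, hbelow⟩, ⟨u, hu, habove⟩⟩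

end Operations

/-- **Gavrilov; Goldstern–Shelah**: on the base set `ℕ`, a binary operation is densely
unary if and only if it is never 1-1. -/
theorem stmt6 : ∀ f : ℕ → ℕ → ℕ, DenselyUnary f ↔ NeverOneOne f := by
  intro f
  rw [denselyUnary_iff, neverOneOne_iff]
  constructor
  · refine fun hdense => ⟨fun hf => ?_, fun hflip => ?_⟩
    · obtain ⟨A, B, hA, hB, hnot⟩ := hf.exists_infinite_forall_not_essUnaryAbove
      obtain ⟨A', hA', B', hB', hA'inf, hB'inf, -, habove⟩ := hdense A B hA hB
      exact hnot A' hA' B' hB' hA'inf hB'inf habove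
    · obtain ⟨B, A, hB, hA, hnot⟩ := hflip.exists_infinite_forall_not_essUnaryAbove
      obtain ⟨A', hA', B', hB', hA'inf, hB'inf, hbelow, -⟩ := hdense A B hA hB
      exact hnot B' hB' A' hA' hB'inf hA'inf hbelow
  · rintro ⟨hf, hflip⟩ A B hA hB
    exact exists_infinite_essUnaryAbove hf hflip hA hB
end
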